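/- For every dimension d ≥ 1 there exists a constant c > 0 independent of the mesh size h and the spline degree p (possibly depending on d) such that for every tensor product spline u ∈ S^d on Ω = (0,1)^d: c^{-1}|u|_{H^1(Ω)}^2 ≤ Σ_{α∈{0,1}^d} |Q_α u|_{H^1(Ω)}^2 ≤ c |u|_{H^1(Ω)}^2, and the analogous two-sided bound holds for the full H^1(Ω)-norm. That is, the L2-orthogonal splitting S^d = ⊕_{α∈{0,1}^d} S_α is H^1-stable uniformly in h and p. -/

import Mathlib

noncomputable section

open MeasureTheory Set

namespace SplineMG

/-- The `j`-th piece of the uniform partition of `[0,1]` into `m` subintervals of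
length `h = 1/m`; the first and last pieces are extended to `-∞` resp. `+∞`
(the spline is extended polynomially outside `[0,1]`). -/
def pieceSet (m j : ℕ) : Set ℝ :=
  (if j = 0 then Iic ((1 : ℝ) / m) else Icc ((j : ℝ) / m) (((j : ℝ) + 1) / m)) ∪
  (if j = m - 1 then Ici (((m : ℝ) - 1) / m) else ∅)

/-- `u : ℝ → ℝ` belongs to the univariate spline space `S` of degree `p` and maximal
smoothness `C^{p-1}` on the uniform partition of `(0,1)` into `m` intervals of
length `h = 1/m`. -/
def IsSpline (m p : ℕ) (u : ℝ → ℝ) : Prop :=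
  ContDiffOn ℝ (p - 1 : ℕ) u (Ioo (0 : ℝ) 1) ∧
  ∀ j < m, ∃ q : Polynomial ℝ, q.natDegree ≤ p ∧ ∀ x ∈ pieceSet m j, u x = q.eval x

/-- `u` belongs to the subspace `S₀` of `S`: all odd derivatives of order `< p`
vanish at both endpoints. -/
def IsSpline0 (m p : ℕ) (u : ℝ → ℝ) : Prop :=
  IsSpline m p u ∧
  ∀ l : ℕ, 2 * l + 1 < p →
    iteratedDeriv (2 * l + 1) u 0 = 0 ∧ iteratedDeriv (2 * l + 1) u 1 = 0

/-- The `L²(0,1)` inner product. -/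
def ip0 (u v : ℝ → ℝ) : ℝ := ∫ x in Ioo (0 : ℝ) 1, u x * v x

/-- The squared `L²(0,1)` norm `‖u‖₀²`. -/
def l2normSq (u : ℝ → ℝ) : ℝ := ∫ x in Ioo (0 : ℝ) 1, u x ^ 2

/-- The `L²(0,1)` norm `‖u‖₀`. -/
def l2norm (u : ℝ → ℝ) : ℝ := Real.sqrt (l2normSq u)

/-- The squared `H¹(0,1)` seminorm `|u|₁²`. -/
def h1semiSq (u : ℝ → ℝ) : ℝ := ∫ x in Ioo (0 : ℝ) 1, deriv u x ^ 2

/-- The `H¹(0,1)` seminorm `|u|₁`. -/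
def h1semi (u : ℝ → ℝ) : ℝ := Real.sqrt (h1semiSq u)

/-- The squared full `H¹(0,1)` norm. -/
def h1normSq (u : ℝ → ℝ) : ℝ := l2normSq u + h1semiSq u

/-- `u` belongs to `S₁`, the `L²(0,1)`-orthogonal complement of `S₀` in `S`. -/
def IsSpline1 (m p : ℕ) (u : ℝ → ℝ) : Prop :=
  IsSpline m p u ∧ ∀ v, IsSpline0 m p v → ip0 u v = 0

/-- `v = Q₀ u` is the `L²(0,1)`-orthogonal projection of `u` onto `S₀`. -/
def IsL2Proj0 (m p : ℕ) (u v : ℝ → ℝ) : Prop :=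
  IsSpline0 m p v ∧ ∀ w, IsSpline0 m p w → ip0 (u - v) w = 0

/-- The component predicate: `false ↦ S₀`, `true ↦ S₁`. -/
def IsSplineC (m p : ℕ) : Bool → (ℝ → ℝ) → Prop
  | false => IsSpline0 m p
  | true => IsSpline1 m p

/-- The tensor-product spline space `S^d = S ⊗ ⋯ ⊗ S` on `(0,1)^d`. -/
def TensorSpline (d m p : ℕ) : Submodule ℝ ((Fin d → ℝ) → ℝ) :=
  Submodule.span ℝ {u | ∃ f : Fin d → ℝ → ℝ, (∀ i, IsSpline m p (f i)) ∧
    u = fun x => ∏ i, f i (x i)}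

/-- The subspace `S_α = S_{α₁} ⊗ ⋯ ⊗ S_{α_d}` of `S^d`, for `α ∈ {0,1}^d`
(`false ↦ 0`, `true ↦ 1`). -/
def TensorSplineSub (d m p : ℕ) (α : Fin d → Bool) : Submodule ℝ ((Fin d → ℝ) → ℝ) :=
  Submodule.span ℝ {u | ∃ f : Fin d → ℝ → ℝ, (∀ i, IsSplineC m p (α i) (f i)) ∧
    u = fun x => ∏ i, f i (x i)}

/-- The open unit cube `Ω = (0,1)^d`. -/
def cube (d : ℕ) : Set (Fin d → ℝ) := Set.univ.pi fun _ => Ioo (0 : ℝ) 1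

/-- The `i`-th partial derivative. -/
def pd (d : ℕ) (i : Fin d) (u : (Fin d → ℝ) → ℝ) : (Fin d → ℝ) → ℝ :=
  fun x => deriv (fun t => u (Function.update x i t)) (x i)

/-- The `L²(Ω)` inner product on the unit cube. -/
def ipd (d : ℕ) (u v : (Fin d → ℝ) → ℝ) : ℝ := ∫ x in cube d, u x * v x

/-- The squared `L²(Ω)` norm. -/
def l2normSqD (d : ℕ) (u : (Fin d → ℝ) → ℝ) : ℝ := ∫ x in cube d, u x ^ 2

/-- The bilinear form `a(u,v) = ∫_Ω (∇u·∇v + uv) dx`. -/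
def aForm (d : ℕ) (u v : (Fin d → ℝ) → ℝ) : ℝ :=
  ∫ x in cube d, (∑ i, pd d i u x * pd d i v x) + u x * v x

/-- The squared `H¹(Ω)` seminorm. -/
def h1semiSqD (d : ℕ) (u : (Fin d → ℝ) → ℝ) : ℝ :=
  ∫ x in cube d, ∑ i, pd d i u x ^ 2

/-- The squared full `H¹(Ω)` norm. -/
def h1normSqD (d : ℕ) (u : (Fin d → ℝ) → ℝ) : ℝ := l2normSqD d u + h1semiSqD d u

/-- `v = Q_α u` is the `L²(Ω)`-orthogonal projection of `u` onto `S_α`. -/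
def IsL2ProjSub (d m p : ℕ) (α : Fin d → Bool) (u v : (Fin d → ℝ) → ℝ) : Prop :=
  v ∈ TensorSplineSub d m p α ∧ ∀ w ∈ TensorSplineSub d m p α, ipd d (u - v) w = 0

/-- The coarse tensor-product spline space `(S_c)^d` (with `m/2` knot spans of
width `2h` per direction). -/
def TensorSplineCoarse (d m p : ℕ) : Submodule ℝ ((Fin d → ℝ) → ℝ) :=
  TensorSpline d (m / 2) p

/-- `v = T_c u` is the `a(·,·)`-orthogonal (Galerkin) projection of `u` onto `(S_c)^d`. -/
def IsGalerkinCoarseProj (d m p : ℕ) (u v : (Fin d → ℝ) → ℝ) : Prop :=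
  v ∈ TensorSplineCoarse d m p ∧ ∀ w ∈ TensorSplineCoarse d m p, aForm d (u - v) w = 0

end SplineMG

namespace SplineMG

/-
In one dimension, let `w` be the `H¹`-orthogonal projection of `u = u₀ + u₁` onto `S₀`. An
Aubin–Nitsche duality argument, by induction on the degree with the two parities of the boundary
conditions alternating, gives `‖u - w‖ ≤ h |u - w|₁`. Since `u₀ - w ∈ S₀` is the `L²`-projection of
`u - w`, the inverse inequality `|z|₁² ≤ 12 h⁻² ‖z‖²` on `S₀` yields `|u₀ - w|₁² ≤ 12 |u - w|₁²`,
so `|u₀|₁` and `|u₁|₁` are controlled by `|u|₁` uniformly in `h` and `p`.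

In `d` dimensions, expand `u` in the tensor products of an `L²`-orthonormal basis adapted to
`S = S₀ ⊕ S₁`. By orthonormality in the other directions, `‖∂ᵢ u‖²` is the sum of the squared
`H¹`-seminorms of the univariate splines with the coefficients of `u` along lines in direction `i`,
and `Q_α` selects one component on some of these lines and annihilates the others. Hence the
univariate bounds carry over with the same constant, whatever `d` is.
-/

section Pieces

variable {m j : ℕ} {x : ℝ}

lemma mem_pieceSet (hj : j < m) :
    x ∈ pieceSet m j ↔
      (j = 0 ∨ (j : ℝ) / m ≤ x) ∧ (j + 1 = m ∨ x ≤ ((j : ℝ) + 1) / m) := by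
  have hle : (j : ℝ) / m ≤ ((j : ℝ) + 1) / m := by gcongr; linarith
  unfold pieceSet
  obtain hlast | hlast := eq_or_ne (j + 1) m
  · subst hlast
    by_cases h0 : j = 0
    · subst h0
      simpa using (le_total x 1).imp_right (zero_le_one.trans ·)
    · simp only [h0, if_false, add_tsub_cancel_right, if_true, Nat.cast_add, Nat.cast_one,
        mem_union, mem_Icc, mem_Ici, false_or, true_or, and_true]
      tauto
  · have hne : j ≠ m - 1 := by omega
    by_cases h0 : j = 0
    · subst h0
      simp [hlast, hne]
    · simp [hlast, hne, h0]

lemma isClosed_pieceSet (m j : ℕ) : IsClosed (pieceSet m j) := by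
  unfold pieceSet
  refine IsClosed.union ?_ ?_ <;> split_ifs
  exacts [isClosed_Iic, isClosed_Icc, isClosed_Ici, isClosed_empty]

lemma ordConnected_pieceSet (hj : j < m) : OrdConnected (pieceSet m j) := by
  refine ⟨fun x hx y hy z hz => ?_⟩
  rw [mem_pieceSet hj] at *
  exact ⟨hx.1.imp_right hz.1.trans', hy.2.imp_right hz.2.trans⟩

lemma Icc_subset_pieceSet (hj : j < m) :
    Icc ((j : ℝ) / m) (((j : ℝ) + 1) / m) ⊆ pieceSet m j :=
  fun _ hx => (mem_pieceSet hj).2 ⟨.inr hx.1, .inr hx.2⟩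

lemma div_lt_add_one_div [NeZero m] (j : ℕ) : (j : ℝ) / m < ((j : ℝ) + 1) / m := by
  have := Nat.pos_of_neZero m
  gcongr
  exact lt_add_one _

lemma Icc_div_subset_Icc_zero_one (hj : j < m) :
    Icc ((j : ℝ) / m) (((j : ℝ) + 1) / m) ⊆ Icc 0 1 := by
  have hm : (0 : ℝ) < m := Nat.cast_pos.2 (by omega)
  exact Icc_subset_Icc (by positivity) ((div_le_one hm).2 (by exact_mod_cast hj))

lemma uniqueDiffOn_pieceSet (hj : j < m) : UniqueDiffOn ℝ (pieceSet m j) := by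
  have : NeZero m := ⟨by omega⟩
  refine uniqueDiffOn_convex (ordConnected_pieceSet hj).convex ?_
  refine (nonempty_Ioo.2 (div_lt_add_one_div (m := m) j)).mono (interior_maximal ?_ isOpen_Ioo)
  exact Ioo_subset_Icc_self.trans (Icc_subset_pieceSet hj)

lemma pieceSet_mem_nhds (hj : j < m) (hleft : j = 0 ∨ (j : ℝ) / m < x)
    (hright : j + 1 = m ∨ x < ((j : ℝ) + 1) / m) : pieceSet m j ∈ nhds x := by
  have hl : ∀ᶠ y in nhds x, j = 0 ∨ (j : ℝ) / m < y :=
    hleft.elim (fun h => .of_forall fun _ => .inl h)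
      fun h => (lt_mem_nhds h).mono fun _ => .inr
  have hr : ∀ᶠ y in nhds x, j + 1 = m ∨ y < ((j : ℝ) + 1) / m :=
    hright.elim (fun h => .of_forall fun _ => .inl h)
      fun h => (gt_mem_nhds h).mono fun _ => .inr
  filter_upwards [hl, hr] with y hyl hyr
  exact (mem_pieceSet hj).2 ⟨hyl.imp_right le_of_lt, hyr.imp_right le_of_lt⟩

/-- The mesh points `j / m`, `j ∈ ℕ`, off which a spline is locally a polynomial (those outside
`[0, 1]` are harmless and spare a bound on `j`). -/
def knots (m : ℕ) : Set ℝ := range fun j : ℕ => (j : ℝ) / m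

lemma countable_knots (m : ℕ) : (knots m).Countable := countable_range _

lemma pieceSet_mem_nhds_of_notMem_knots (hj : j < m) (hx : x ∈ pieceSet m j)
    (hknot : x ∉ knots m) : pieceSet m j ∈ nhds x := by
  rw [mem_pieceSet hj] at hx
  refine pieceSet_mem_nhds hj (hx.1.imp_right fun h => h.lt_of_ne ?_)
    (hx.2.imp_right fun h => h.lt_of_ne ?_)
  · exact fun h => hknot ⟨j, h⟩
  · exact fun h => hknot ⟨j + 1, by simp [h]⟩

lemma eq_add_one_of_mem_pieceSet {i : ℕ} (hij : i < j) (hj : j < m) (hi : x ∈ pieceSet m i)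
    (hx : x ∈ pieceSet m j) : j = i + 1 ∧ x = ((i : ℝ) + 1) / m := by
  have hm : (0 : ℝ) < m := Nat.cast_pos.2 (by omega)
  have hle := ((mem_pieceSet hj).1 hx).1.resolve_left (by omega)
  have hge := ((mem_pieceSet (hij.trans hj)).1 hi).2.resolve_left (by omega)
  have hji : j ≤ i + 1 := by exact_mod_cast (div_le_div_iff_of_pos_right hm).1 (hle.trans hge)
  obtain rfl : j = i + 1 := by omega
  exact ⟨rfl, hge.antisymm (by simpa using hle)⟩

/-- The number of a piece containing `x`. -/
def pieceIndex (m : ℕ) (x : ℝ) : ℕ := min (m - 1) ⌊(m : ℝ) * x⌋₊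

variable [NeZero m]

lemma pieceIndex_lt (x : ℝ) : pieceIndex m x < m := by
  have := Nat.pos_of_neZero m
  unfold pieceIndex
  omega

lemma mem_pieceSet_pieceIndex (x : ℝ) : x ∈ pieceSet m (pieceIndex m x) := by
  have hm : (0 : ℝ) < m := Nat.cast_pos.2 (Nat.pos_of_neZero m)
  refine (mem_pieceSet (pieceIndex_lt x)).2 ⟨or_iff_not_imp_left.2 fun h => ?_,
    or_iff_not_imp_left.2 fun h => ?_⟩
  · have hfloor : pieceIndex m x ≤ ⌊(m : ℝ) * x⌋₊ := min_le_right _ _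
    rw [div_le_iff₀' hm]
    exact (Nat.le_floor_iff' h).1 hfloor
  · have hfloor : pieceIndex m x = ⌊(m : ℝ) * x⌋₊ := by
      have := pieceIndex_lt (m := m) x
      unfold pieceIndex at *
      omega
    rw [le_div_iff₀' hm, hfloor]
    exact (Nat.lt_floor_add_one _).le

lemma iUnion_pieceSet : ⋃ j : Fin m, pieceSet m j = univ :=
  eq_univ_of_forall fun x =>
    mem_iUnion.2 ⟨⟨pieceIndex m x, pieceIndex_lt x⟩, mem_pieceSet_pieceIndex x⟩

lemma exists_pieceSet_mem_nhds_of_notMem_Ioo (hx : x ∉ Ioo (0 : ℝ) 1) :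
    ∃ j < m, pieceSet m j ∈ nhds x := by
  have hm := Nat.pos_of_neZero m
  have hm' : (0 : ℝ) < m := Nat.cast_pos.2 hm
  obtain h0 | h1 : x ≤ 0 ∨ 1 ≤ x := by simpa [mem_Ioo, or_iff_not_imp_left] using hx
  · refine ⟨0, hm, pieceSet_mem_nhds hm (.inl rfl) (.inr (h0.trans_lt ?_))⟩
    positivity
  · refine ⟨m - 1, by omega, pieceSet_mem_nhds (by omega) (.inr (lt_of_lt_of_le ?_ h1))
      (.inl (by omega))⟩
    rw [div_lt_one hm']
    exact_mod_cast Nat.sub_one_lt_of_lt hm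

lemma continuous_of_continuousOn_pieceSet {u : ℝ → ℝ}
    (h : ∀ j < m, ContinuousOn u (pieceSet m j)) : Continuous u :=
  (locallyFinite_of_finite fun j : Fin m => pieceSet m j).continuous iUnion_pieceSet
    (fun j => isClosed_pieceSet m j) fun j => h j j.2

lemma eqOn_pieceSet_of_agree {l : ℕ → ℝ → ℝ}
    (hl : ∀ i, l i (((i : ℝ) + 1) / m) = l (i + 1) (((i : ℝ) + 1) / m)) (hj : j < m) :
    EqOn (fun x => l (pieceIndex m x) x) (l j) (pieceSet m j) := by
  have agree {i j : ℕ} {x : ℝ} (hij : i < j) (hj : j < m) (hi : x ∈ pieceSet m i)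
      (hx : x ∈ pieceSet m j) : l i x = l j x := by
    obtain ⟨rfl, rfl⟩ := eq_add_one_of_mem_pieceSet hij hj hi hx
    exact hl i
  intro x hx
  have hmem := mem_pieceSet_pieceIndex (m := m) x
  obtain h | h | h := lt_trichotomy (pieceIndex m x) j
  · exact agree h hj hmem hx
  · simp only [h]
  · exact (agree h (pieceIndex_lt x) hx hmem).symm

end Pieces

section Splines

variable {m p : ℕ} {u v : ℝ → ℝ}

lemma contDiff_polynomial_eval (q : Polynomial ℝ) (n : ℕ) : ContDiff ℝ n fun x => q.eval x := by
  simpa [Polynomial.coe_aeval_eq_eval] using Polynomial.contDiff_aeval (𝕜 := ℝ) (R := ℝ) q n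

lemma exists_polynomial_derivative_eq {q : Polynomial ℝ} (hq : q.natDegree ≤ p) :
    ∃ Q : Polynomial ℝ, Q.natDegree ≤ p + 1 ∧ Q.derivative = q := by
  refine ⟨∑ i ∈ Finset.range (p + 1), Polynomial.monomial (i + 1) (q.coeff i / (i + 1)), ?_, ?_⟩
  · refine Polynomial.natDegree_sum_le_of_forall_le _ _ fun i hi => ?_
    have := Finset.mem_range.1 hi
    exact (Polynomial.natDegree_monomial_le _).trans (by omega)
  · conv_rhs => rw [q.as_sum_range' (p + 1) (by omega)]
    rw [Polynomial.derivative_sum]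
    refine Finset.sum_congr rfl fun i _ => ?_
    have : (i : ℝ) + 1 ≠ 0 := by positivity
    rw [Polynomial.derivative_monomial]
    simp [div_mul_cancel₀ _ this]

lemma hasDerivAt_primitive {g : ℝ → ℝ} (hg : Continuous g) (c x : ℝ) :
    HasDerivAt (fun x => c + ∫ t in (0 : ℝ)..x, g t) (g x) x :=
  (hg.integral_hasStrictDerivAt 0 x).hasDerivAt.const_add c

lemma deriv_primitive {g : ℝ → ℝ} (hg : Continuous g) (c : ℝ) :
    deriv (fun x => c + ∫ t in (0 : ℝ)..x, g t) = g :=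
  funext fun x => (hasDerivAt_primitive hg c x).deriv

lemma isSpline_one_of_polynomial_pieces [NeZero m]
    (h : ∀ j < m, ∃ q : Polynomial ℝ, q.natDegree ≤ 1 ∧ ∀ x ∈ pieceSet m j, u x = q.eval x) :
    IsSpline m 1 u := by
  refine ⟨ContDiff.contDiffOn ?_, h⟩
  simp only [tsub_self, CharP.cast_eq_zero, contDiff_zero]
  refine continuous_of_continuousOn_pieceSet (m := m) fun j hj => ?_
  obtain ⟨q, -, hq⟩ := h j hj
  exact q.continuous.continuousOn.congr hq

/-- The spline space `S` of degree `p` on `m` intervals, as a subspace of all functions. -/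
def splines (m p : ℕ) : Submodule ℝ (ℝ → ℝ) where
  carrier := {u | IsSpline m p u}
  zero_mem' := ⟨contDiffOn_const, fun _ _ => ⟨0, by simp, fun _ _ => by simp⟩⟩
  add_mem' := by
    rintro u v ⟨hu, hu'⟩ ⟨hv, hv'⟩
    refine ⟨hu.add hv, fun j hj => ?_⟩
    obtain ⟨q, hq, huq⟩ := hu' j hj
    obtain ⟨r, hr, hvr⟩ := hv' j hj
    exact ⟨q + r, Polynomial.natDegree_add_le_of_degree_le hq hr,
      fun x hx => by simp [huq x hx, hvr x hx]⟩
  smul_mem' := by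
    rintro c u ⟨hu, hu'⟩
    refine ⟨contDiffOn_const.smul hu, fun j hj => ?_⟩
    obtain ⟨q, hq, huq⟩ := hu' j hj
    exact ⟨c • q, (Polynomial.natDegree_smul_le _ _).trans hq, fun x hx => by simp [huq x hx]⟩

lemma isSpline_const (c : ℝ) : IsSpline m p fun _ => c :=
  ⟨contDiffOn_const, fun _ _ => ⟨.C c, by simp, fun _ _ => by simp⟩⟩

namespace IsSpline

lemma exists_eventuallyEq (hu : IsSpline m p u) {j : ℕ} (hj : j < m) :
    ∃ q : Polynomial ℝ, q.natDegree ≤ p ∧ (∀ x ∈ pieceSet m j, u x = q.eval x) ∧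
      ∀ x, pieceSet m j ∈ nhds x → u =ᶠ[nhds x] fun x => q.eval x := by
  obtain ⟨q, hdeg, hq⟩ := hu.2 j hj
  exact ⟨q, hdeg, hq, fun x hx => Filter.mem_of_superset hx hq⟩

variable [NeZero m]

lemma continuous (hu : IsSpline m p u) : Continuous u :=
  continuous_of_continuousOn_pieceSet fun j hj => by
    obtain ⟨q, -, hq⟩ := hu.2 j hj
    exact q.continuous.continuousOn.congr hq

lemma differentiableAt (hu : IsSpline m p u) {x : ℝ} (hx : x ∉ knots m) :
    DifferentiableAt ℝ u x := by
  obtain ⟨q, -, -, hq⟩ := hu.exists_eventuallyEq (pieceIndex_lt x)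
  exact q.differentiableAt.congr_of_eventuallyEq
    (hq x (pieceSet_mem_nhds_of_notMem_knots (pieceIndex_lt x) (mem_pieceSet_pieceIndex x) hx))

lemma contDiffAt_of_notMem_Ioo (hu : IsSpline m p u) {x : ℝ} (hx : x ∉ Ioo (0 : ℝ) 1) (n : ℕ) :
    ContDiffAt ℝ n u x := by
  obtain ⟨j, hj, hnhds⟩ := exists_pieceSet_mem_nhds_of_notMem_Ioo (m := m) hx
  obtain ⟨q, -, -, hq⟩ := hu.exists_eventuallyEq hj
  exact (contDiff_polynomial_eval q n).contDiffAt.congr_of_eventuallyEq (hq x hnhds)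

lemma differentiable (hu : IsSpline m (p + 2) u) : Differentiable ℝ u := by
  intro x
  by_cases hx : x ∈ Ioo (0 : ℝ) 1
  · exact (hu.1.contDiffAt (isOpen_Ioo.mem_nhds hx)).differentiableAt (by simp)
  · exact (hu.contDiffAt_of_notMem_Ioo hx 1).differentiableAt (by simp)

protected lemma deriv (hu : IsSpline m (p + 2) u) : IsSpline m (p + 1) (deriv u) := by
  refine ⟨hu.1.deriv_of_isOpen isOpen_Ioo (by simp), fun j hj => ?_⟩
  obtain ⟨q, hdeg, hq⟩ := hu.2 j hj
  refine ⟨q.derivative, (Polynomial.natDegree_derivative_le q).trans (by omega), fun x hx => ?_⟩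
  have hunique := uniqueDiffOn_pieceSet hj x hx
  rw [← (hu.differentiable x).derivWithin hunique, ← q.deriv,
    ← q.differentiableAt.derivWithin hunique]
  exact derivWithin_congr hq (hq x hx)

lemma primitive (hu : IsSpline m (p + 1) u) (c : ℝ) :
    IsSpline m (p + 2) fun x => c + ∫ t in (0 : ℝ)..x, u t := by
  refine ⟨?_, fun j hj => ?_⟩
  · have hsucc : ((p + 2 - 1 : ℕ) : WithTop ℕ∞) = ((p + 1 - 1 : ℕ) : WithTop ℕ∞) + 1 := by simp
    rw [hsucc, contDiffOn_succ_iff_deriv_of_isOpen isOpen_Ioo, deriv_primitive hu.continuous]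
    exact ⟨fun x _ =>
        (hasDerivAt_primitive hu.continuous c x).differentiableAt.differentiableWithinAt,
      by simp, hu.1⟩
  · obtain ⟨q, hdeg, hq⟩ := hu.2 j hj
    obtain ⟨Q, hQdeg, rfl⟩ := exists_polynomial_derivative_eq hdeg
    set a : ℝ := (j : ℝ) / m
    have ha : a ∈ pieceSet m j := Icc_subset_pieceSet hj ⟨le_rfl, (div_lt_add_one_div j).le⟩
    refine ⟨Q + .C (c + (∫ t in (0 : ℝ)..a, u t) - Q.eval a),
      (by rwa [Polynomial.natDegree_add_C]), fun x hx => ?_⟩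
    have hint : ∫ t in a..x, u t = Q.eval x - Q.eval a := by
      have hcongr : ∫ t in a..x, u t = ∫ t in a..x, Q.derivative.eval t :=
        intervalIntegral.integral_congr fun t ht =>
          hq t ((ordConnected_pieceSet hj).uIcc_subset ha hx ht)
      rw [hcongr]
      exact intervalIntegral.integral_eq_sub_of_hasDerivAt (fun t _ => Q.hasDerivAt t)
        (Q.derivative.continuous.intervalIntegrable _ _)
    have hsplit := intervalIntegral.integral_add_adjacent_intervals (μ := volume)
      (hu.continuous.intervalIntegrable 0 a) (hu.continuous.intervalIntegrable a x)
    simp only [← hsplit, hint, Polynomial.eval_add, Polynomial.eval_C]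
    ring

lemma eq_zero_of_eqOn_Icc (hu : IsSpline m p u) (h : EqOn u 0 (Icc 0 1)) : u = 0 := by
  funext x
  set j := pieceIndex m x
  have hj : j < m := pieceIndex_lt x
  obtain ⟨q, -, hq⟩ := hu.2 j hj
  have hroots : Icc ((j : ℝ) / m) (((j : ℝ) + 1) / m) ⊆ {y | q.IsRoot y} := by
    intro y hy
    have hy1 : y ∈ Icc (0 : ℝ) 1 := Icc_div_subset_Icc_zero_one hj hy
    exact (hq y (Icc_subset_pieceSet hj hy)).symm.trans (h hy1)
  have hq0 : q = 0 := Polynomial.eq_zero_of_infinite_isRoot q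
    ((Icc_infinite (div_lt_add_one_div j)).mono hroots)
  simp [hq x (mem_pieceSet_pieceIndex x), hq0]

end IsSpline

/-- The piecewise polynomial function with prescribed polynomial `q j` on the `j`-th piece; every
spline arises this way, which bounds the dimension of the spline space. -/
def piecewisePolynomial (m p : ℕ) [NeZero m] :
    (Fin m → Polynomial.degreeLT ℝ (p + 1)) →ₗ[ℝ] (ℝ → ℝ) where
  toFun q x := (q ⟨pieceIndex m x, pieceIndex_lt x⟩ : Polynomial ℝ).eval x
  map_add' q r := by funext x; simp
  map_smul' c q := by funext x; simp

lemma splines_le_range_piecewisePolynomial [NeZero m] :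
    splines m p ≤ LinearMap.range (piecewisePolynomial m p) := by
  intro u hu
  choose q hdeg hq using hu.2
  refine ⟨fun j => ⟨q j j.2, Polynomial.mem_degreeLT.2 ?_⟩, ?_⟩
  · exact Polynomial.degree_le_natDegree.trans_lt
      (by exact_mod_cast Nat.lt_succ_of_le (hdeg j j.2))
  · exact funext fun x => (hq _ (pieceIndex_lt x) x (mem_pieceSet_pieceIndex x)).symm

instance [NeZero m] : FiniteDimensional ℝ (splines m p) :=
  have : FiniteDimensional ℝ (Polynomial.degreeLT ℝ (p + 1)) :=
    (Polynomial.degreeLTEquiv ℝ (p + 1)).symm.finiteDimensional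
  Submodule.finiteDimensional_of_le splines_le_range_piecewisePolynomial

end Splines

section SquareIntegrable

variable {X : Type*} [MeasurableSpace X] {μ : Measure X} {f g h : X → ℝ}

lemma inner_toLp_toLp (hf : MemLp f 2 μ) (hg : MemLp g 2 μ) :
    inner ℝ (hf.toLp f) (hg.toLp g) = ∫ x, f x * g x ∂μ := by
  rw [L2.inner_def]
  refine integral_congr_ae ?_
  filter_upwards [hf.coeFn_toLp, hg.coeFn_toLp] with x hfx hgx
  simp [hfx, hgx, mul_comm]

lemma sq_integral_mul_le (hf : MemLp f 2 μ) (hg : MemLp g 2 μ) :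
    (∫ x, f x * g x ∂μ) ^ 2 ≤ (∫ x, f x ^ 2 ∂μ) * ∫ x, g x ^ 2 ∂μ := by
  simp only [pow_two (f _), pow_two (g _)]
  rw [← inner_toLp_toLp hf hg, ← inner_toLp_toLp hf hf, ← inner_toLp_toLp hg hg, pow_two]
  exact real_inner_mul_inner_self_le _ _

lemma integral_sub_mul (hf : MemLp f 2 μ) (hg : MemLp g 2 μ) (hh : MemLp h 2 μ) :
    ∫ x, (f - g) x * h x ∂μ = (∫ x, f x * h x ∂μ) - ∫ x, g x * h x ∂μ := by
  simp only [Pi.sub_apply, sub_mul]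
  exact integral_sub (hf.integrable_mul hh) (hg.integrable_mul hh)

lemma integral_add_sq (hf : MemLp f 2 μ) (hg : MemLp g 2 μ) :
    ∫ x, (f + g) x ^ 2 ∂μ =
      (∫ x, f x ^ 2 ∂μ) + 2 * (∫ x, f x * g x ∂μ) + ∫ x, g x ^ 2 ∂μ := by
  have hfg : Integrable (fun x => 2 * (f x * g x)) μ := (hf.integrable_mul hg).const_mul 2
  have hexpand (x) : (f + g) x ^ 2 = f x ^ 2 + 2 * (f x * g x) + g x ^ 2 := by
    simp only [Pi.add_apply]
    ring
  simp only [hexpand]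
  rw [integral_add (hf.integrable_sq.fun_add hfg) hg.integrable_sq,
    integral_add hf.integrable_sq hfg, integral_const_mul]

/-- The map sending the elements of a space of square integrable functions to their `L²` classes. -/
def toL2 (V : Submodule ℝ (X → ℝ)) (hV : ∀ u ∈ V, MemLp u 2 μ) : V →ₗ[ℝ] Lp ℝ 2 μ where
  toFun u := (hV u u.2).toLp u
  map_add' u v := MemLp.toLp_add (hV u u.2) (hV v v.2)
  map_smul' c u := MemLp.toLp_const_smul c (hV u u.2)

variable (V : Submodule ℝ (X → ℝ)) [FiniteDimensional ℝ V]

lemma exists_mem_forall_integral_sub_mul_eq_zero (hV : ∀ u ∈ V, MemLp u 2 μ)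
    (hg : MemLp g 2 μ) : ∃ q ∈ V, ∀ z ∈ V, ∫ x, (g - q) x * z x ∂μ = 0 := by
  let K := LinearMap.range (toL2 V hV)
  obtain ⟨q, hq⟩ := (K.orthogonalProjectionOnto (hg.toLp g)).2
  refine ⟨q, q.2, fun z hz => ?_⟩
  rw [← inner_toLp_toLp (hg.sub (hV q q.2)) (hV z hz), MemLp.toLp_sub hg (hV q q.2)]
  have hproj : (hV q q.2).toLp q = K.starProjection (hg.toLp g) := hq
  rw [hproj]
  exact K.starProjection_inner_eq_zero _ _ ⟨⟨z, hz⟩, rfl⟩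

lemma exists_orthonormal_span_range_eq (hV : ∀ u ∈ V, MemLp u 2 μ)
    (hdef : ∀ u ∈ V, ∫ x, u x ^ 2 ∂μ = 0 → u = 0) :
    ∃ (n : ℕ) (e : Fin n → X → ℝ), (∀ i j, ∫ x, e i x * e j x ∂μ = if i = j then 1 else 0) ∧
      Submodule.span ℝ (range e) = V := by
  have hinj : Function.Injective (toL2 V hV) := by
    refine (injective_iff_map_eq_zero _).2 fun u hu => Subtype.ext (hdef u u.2 ?_)
    simp only [pow_two]
    rw [← inner_toLp_toLp (hV u u.2) (hV u u.2)]
    exact inner_self_eq_zero.2 hu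
  let b := stdOrthonormalBasis ℝ (LinearMap.range (toL2 V hV))
  let e := b.toBasis.map (LinearEquiv.ofInjective _ hinj).symm
  refine ⟨_, fun i => (e i : X → ℝ), fun i j => ?_, ?_⟩
  · rw [← inner_toLp_toLp (hV _ (e i).2) (hV _ (e j).2), ← orthonormal_iff_ite.1 b.orthonormal i j]
    have he (i) : toL2 V hV (e i) = b i := by
      simp [e, ← LinearEquiv.ofInjective_apply _ (h := hinj)]
    exact congrArg₂ _ (he i) (he j)
  · have : range (fun i => (e i : X → ℝ)) = V.subtype '' range e := (range_comp _ _)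
    rw [this, Submodule.span_image, e.span_eq, Submodule.map_top, Submodule.range_subtype]

end SquareIntegrable

section UnitInterval

variable {u v w : ℝ → ℝ}

lemma setIntegral_Ioo_eq_intervalIntegral (f : ℝ → ℝ) {a b : ℝ} (hab : a ≤ b) :
    ∫ x in Ioo a b, f x = ∫ x in a..b, f x := by
  rw [intervalIntegral.integral_of_le hab, integral_Ioc_eq_integral_Ioo]

/-- Membership in `L²(0,1)`. -/
abbrev MemL2 (u : ℝ → ℝ) : Prop := MemLp u 2 (volume.restrict (Ioo (0 : ℝ) 1))

lemma memLp_restrict_Ioo_of_continuous (hu : Continuous u) (a b : ℝ) :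
    MemLp u 2 (volume.restrict (Ioo a b)) :=
  (memLp_two_iff_integrable_sq hu.aestronglyMeasurable).2
    ((hu.pow 2).integrableOn_Icc.mono_set Ioo_subset_Icc_self)

lemma ip0_comm (u v : ℝ → ℝ) : ip0 u v = ip0 v u := by
  simp only [ip0, mul_comm]

lemma ip0_self (u : ℝ → ℝ) : ip0 u u = l2normSq u := by
  simp only [ip0, l2normSq, pow_two]

lemma l2normSq_nonneg (u : ℝ → ℝ) : 0 ≤ l2normSq u := integral_nonneg fun _ => sq_nonneg _

lemma l2normSq_congr_ae (h : u =ᵐ[volume] v) : l2normSq u = l2normSq v :=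
  integral_congr_ae (ae_restrict_of_ae (h.mono fun x hx => by simp only [hx]))

lemma ip0_congr_ae (h : u =ᵐ[volume] v) (w : ℝ → ℝ) : ip0 u w = ip0 v w :=
  integral_congr_ae (ae_restrict_of_ae (h.mono fun x hx => by simp only [hx]))

lemma l2normSq_neg (u : ℝ → ℝ) : l2normSq (-u) = l2normSq u := by
  simp only [l2normSq, Pi.neg_apply, neg_sq]

lemma ip0_neg_left (u v : ℝ → ℝ) : ip0 (-u) v = -ip0 u v := by
  simp only [ip0, Pi.neg_apply, neg_mul, integral_neg]

lemma ip0_smul_left (c : ℝ) (u v : ℝ → ℝ) : ip0 (c • u) v = c * ip0 u v := by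
  simp only [ip0, Pi.smul_apply, smul_eq_mul, mul_assoc, integral_const_mul]

lemma ip0_add_left (hu : MemL2 u) (hv : MemL2 v) (hw : MemL2 w) :
    ip0 (u + v) w = ip0 u w + ip0 v w := by
  simp only [ip0, Pi.add_apply, add_mul]
  exact integral_add (hu.integrable_mul hw) (hv.integrable_mul hw)

lemma ip0_sub_right (hu : MemL2 u) (hv : MemL2 v) (hw : MemL2 w) :
    ip0 u (v - w) = ip0 u v - ip0 u w := by
  simpa only [ip0, mul_comm] using integral_sub_mul hv hw hu

lemma sq_ip0_le (hu : MemL2 u) (hv : MemL2 v) : ip0 u v ^ 2 ≤ l2normSq u * l2normSq v :=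
  sq_integral_mul_le hu hv

lemma l2normSq_add (hu : MemL2 u) (hv : MemL2 v) :
    l2normSq (u + v) = l2normSq u + 2 * ip0 u v + l2normSq v :=
  integral_add_sq hu hv

lemma l2normSq_add_le (hu : MemL2 u) (hv : MemL2 v) :
    l2normSq (u + v) ≤ 2 * (l2normSq u + l2normSq v) := by
  have hsub := l2normSq_add hu hv.neg
  rw [l2normSq_neg, ip0_comm, ip0_neg_left, ip0_comm] at hsub
  linarith [l2normSq_add hu hv, l2normSq_nonneg (u + -v)]

lemma eqOn_zero_of_l2normSq_eq_zero (hu : Continuous u) (h : l2normSq u = 0) :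
    EqOn u 0 (Icc 0 1) := by
  rw [l2normSq, setIntegral_Ioo_eq_intervalIntegral _ zero_le_one] at h
  by_contra hne
  obtain ⟨x, hx, hux⟩ : ∃ x ∈ Icc (0 : ℝ) 1, u x ≠ 0 := by
    simpa only [EqOn, not_forall, exists_prop, Pi.zero_apply] using hne
  exact h.not_gt (intervalIntegral.integral_pos zero_lt_one (hu.pow 2).continuousOn
    (fun _ _ => sq_nonneg _) ⟨x, hx, by positivity⟩)

end UnitInterval

section WeakDerivative

variable {a b : ℝ} {s t : Set ℝ} {f u v w : ℝ → ℝ}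

/-- Continuous functions that are differentiable off a countable set, with square integrable
derivative on `s`. For `s = (0,1)` this is a subclass of `H¹(0,1)` that contains the splines and
on which the classical derivative is the weak one. -/
structure IsH1On (s : Set ℝ) (u : ℝ → ℝ) : Prop where
  continuous : Continuous u
  countable_not_differentiableAt : {x | ¬DifferentiableAt ℝ u x}.Countable
  memLp_deriv : MemLp (deriv u) 2 (volume.restrict s)

namespace IsH1On

lemma memLp (hu : IsH1On s u) (a b : ℝ) : MemLp u 2 (volume.restrict (Ioo a b)) :=
  memLp_restrict_Ioo_of_continuous hu.continuous a b

lemma mono (hu : IsH1On s u) (hts : t ⊆ s) : IsH1On t u :=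
  ⟨hu.continuous, hu.countable_not_differentiableAt,
    hu.memLp_deriv.mono_measure (Measure.restrict_mono hts le_rfl)⟩

lemma ae_differentiableAt (hu : IsH1On s u) : ∀ᵐ x, DifferentiableAt ℝ u x := by
  filter_upwards [hu.countable_not_differentiableAt.ae_notMem volume] with x hx
  exact not_not.1 hx

lemma deriv_add_ae (hu : IsH1On s u) (hv : IsH1On s v) :
    deriv (u + v) =ᵐ[volume] deriv u + deriv v := by
  filter_upwards [hu.ae_differentiableAt, hv.ae_differentiableAt] with x hux hvx
  exact deriv_add hux hvx

lemma deriv_sub_ae (hu : IsH1On s u) (hv : IsH1On s v) :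
    deriv (u - v) =ᵐ[volume] deriv u - deriv v := by
  filter_upwards [hu.ae_differentiableAt, hv.ae_differentiableAt] with x hux hvx
  exact deriv_sub hux hvx

lemma sub (hu : IsH1On s u) (hv : IsH1On s v) : IsH1On s (u - v) where
  continuous := hu.continuous.sub hv.continuous
  countable_not_differentiableAt := by
    refine (hu.countable_not_differentiableAt.union hv.countable_not_differentiableAt).mono ?_
    intro x hx
    by_contra! hc
    exact hx ((not_not.1 fun h => hc (.inl h)).sub (not_not.1 fun h => hc (.inr h)))
  memLp_deriv := (hu.memLp_deriv.sub hv.memLp_deriv).ae_eq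
    (ae_restrict_of_ae (hu.deriv_sub_ae hv).symm)

lemma primitive (hf : Continuous f) (a b c : ℝ) :
    IsH1On (Ioo a b) fun x => c + ∫ t in (0 : ℝ)..x, f t where
  continuous := continuous_iff_continuousAt.2 fun x => (hasDerivAt_primitive hf c x).continuousAt
  countable_not_differentiableAt := by
    simp [(hasDerivAt_primitive hf c _).differentiableAt]
  memLp_deriv := by
    rw [deriv_primitive hf]
    exact memLp_restrict_Ioo_of_continuous hf a b

lemma intervalIntegral_deriv (hab : a ≤ b) (hu : IsH1On (Ioo a b) u) :
    ∫ x in a..b, deriv u x = u b - u a :=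
  integral_eq_of_hasDerivAt_off_countable_of_le u (deriv u) hab hu.countable_not_differentiableAt
    hu.continuous.continuousOn (fun _ hx => (not_not.1 hx.2).hasDerivAt)
    ((intervalIntegrable_iff_integrableOn_Ioo_of_le hab).2
      (hu.memLp_deriv.integrable one_le_two))

lemma sq_sub_le (hab : a ≤ b) (hu : IsH1On (Ioo a b) u) :
    (u b - u a) ^ 2 ≤ (b - a) * ∫ x in Ioo a b, deriv u x ^ 2 := by
  have hcs := sq_integral_mul_le (memLp_restrict_Ioo_of_continuous continuous_const a b)
    hu.memLp_deriv (f := fun _ => 1)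
  rw [← hu.intervalIntegral_deriv hab, ← setIntegral_Ioo_eq_intervalIntegral _ hab]
  simpa [hab] using hcs

lemma integral_sq_le_of_eq_zero (hab : a ≤ b) (hu : IsH1On (Ioo a b) u) (ha : u a = 0) :
    ∫ x in Ioo a b, u x ^ 2 ≤ (b - a) ^ 2 * ∫ x in Ioo a b, deriv u x ^ 2 := by
  set D := ∫ x in Ioo a b, deriv u x ^ 2
  have hpoint (x) (hx : x ∈ Ioo a b) : u x ^ 2 ≤ (b - a) * D := by
    have hsub : Ioo a x ⊆ Ioo a b := Ioo_subset_Ioo_right hx.2.le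
    have hmono : ∫ y in Ioo a x, deriv u y ^ 2 ≤ D :=
      setIntegral_mono_set hu.memLp_deriv.integrable_sq (.of_forall fun _ => sq_nonneg _)
        (.of_forall hsub)
    have hx' := (hu.mono hsub).sq_sub_le hx.1.le
    rw [ha, sub_zero] at hx'
    refine hx'.trans ?_
    gcongr
    exact hx.2.le
  calc ∫ x in Ioo a b, u x ^ 2 ≤ ∫ _ in Ioo a b, (b - a) * D :=
        setIntegral_mono_on (hu.memLp a b).integrable_sq (integrable_const _) measurableSet_Ioo
          hpoint
    _ = (b - a) ^ 2 * D := by simp [hab]; ring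

lemma ip0_deriv_add_ip0_deriv (hu : IsH1On (Ioo 0 1) u) (hv : IsH1On (Ioo 0 1) v) :
    ip0 (deriv u) v + ip0 u (deriv v) = u 1 * v 1 - u 0 * v 0 := by
  have hint₁ : Integrable (fun x => deriv u x * v x) (volume.restrict (Ioo 0 1)) :=
    hu.memLp_deriv.integrable_mul (hv.memLp 0 1)
  have hint₂ : Integrable (fun x => u x * deriv v x) (volume.restrict (Ioo 0 1)) :=
    (hu.memLp 0 1).integrable_mul hv.memLp_deriv
  rw [ip0, ip0, ← integral_add hint₁ hint₂, setIntegral_Ioo_eq_intervalIntegral _ zero_le_one]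
  refine integral_eq_of_hasDerivAt_off_countable_of_le (fun x => u x * v x) _ zero_le_one
    (hu.countable_not_differentiableAt.union hv.countable_not_differentiableAt)
    (hu.continuous.mul hv.continuous).continuousOn (fun x hx => ?_)
    ((intervalIntegrable_iff_integrableOn_Ioo_of_le zero_le_one).2 (hint₁.add hint₂))
  exact (not_not.1 fun h => hx.2 (.inl h)).hasDerivAt.mul
    (not_not.1 fun h => hx.2 (.inr h)).hasDerivAt

end IsH1On

lemma h1semiSq_eq_l2normSq_deriv (u : ℝ → ℝ) : h1semiSq u = l2normSq (deriv u) := rfl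

lemma h1semiSq_nonneg (u : ℝ → ℝ) : 0 ≤ h1semiSq u := l2normSq_nonneg _

lemma h1semiSq_add (hu : IsH1On (Ioo 0 1) u) (hv : IsH1On (Ioo 0 1) v) :
    h1semiSq (u + v) = h1semiSq u + 2 * ip0 (deriv u) (deriv v) + h1semiSq v :=
  (l2normSq_congr_ae (hu.deriv_add_ae hv)).trans (l2normSq_add hu.memLp_deriv hv.memLp_deriv)

lemma h1semiSq_add_le (hu : IsH1On (Ioo 0 1) u) (hv : IsH1On (Ioo 0 1) v) :
    h1semiSq (u + v) ≤ 2 * (h1semiSq u + h1semiSq v) :=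
  (l2normSq_congr_ae (hu.deriv_add_ae hv)).trans_le (l2normSq_add_le hu.memLp_deriv hv.memLp_deriv)

lemma h1semiSq_sub_le (hu : IsH1On (Ioo 0 1) u) (hv : IsH1On (Ioo 0 1) v) :
    h1semiSq (u - v) ≤ 2 * (h1semiSq u + h1semiSq v) := by
  rw [h1semiSq_eq_l2normSq_deriv, l2normSq_congr_ae (hu.deriv_sub_ae hv), sub_eq_add_neg]
  refine (l2normSq_add_le hu.memLp_deriv hv.memLp_deriv.neg).trans_eq ?_
  rw [l2normSq_neg, h1semiSq_eq_l2normSq_deriv, h1semiSq_eq_l2normSq_deriv]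

end WeakDerivative

section SplineWeakDerivative

variable {m p : ℕ} [NeZero m] {f u v : ℝ → ℝ}

lemma integral_eq_sum_integral_pieces (hf : IntegrableOn f (Ioo 0 1)) :
    ∫ x in Ioo (0 : ℝ) 1, f x =
      ∑ j ∈ Finset.range m, ∫ x in Ioo ((j : ℝ) / m) (((j : ℝ) + 1) / m), f x := by
  have hpiece (j : ℕ) (hj : j < m) :
      IntervalIntegrable f volume ((j : ℝ) / m) (((j + 1 : ℕ) : ℝ) / m) := by
    push_cast
    rw [intervalIntegrable_iff_integrableOn_Icc_of_le (div_lt_add_one_div j).le]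
    exact ((integrableOn_Icc_iff_integrableOn_Ioo (by simp) (by simp)).2 hf).mono_set
      (Icc_div_subset_Icc_zero_one hj)
  have hsum := intervalIntegral.sum_integral_adjacent_intervals (μ := volume) hpiece
  simp only [Nat.cast_add, Nat.cast_one, Nat.cast_zero, zero_div,
    div_self (NeZero.ne (m : ℝ))] at hsum
  rw [setIntegral_Ioo_eq_intervalIntegral _ zero_le_one, ← hsum]
  exact Finset.sum_congr rfl fun j _ =>
    (setIntegral_Ioo_eq_intervalIntegral _ (div_lt_add_one_div j).le).symm

lemma integral_le_integral_of_pieces {g : ℝ → ℝ} (hf : IntegrableOn f (Ioo 0 1))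
    (hg : IntegrableOn g (Ioo 0 1))
    (h : ∀ j < m, ∫ x in Ioo ((j : ℝ) / m) (((j : ℝ) + 1) / m), f x ≤
      ∫ x in Ioo ((j : ℝ) / m) (((j : ℝ) + 1) / m), g x) :
    ∫ x in Ioo (0 : ℝ) 1, f x ≤ ∫ x in Ioo (0 : ℝ) 1, g x := by
  rw [integral_eq_sum_integral_pieces (m := m) hf, integral_eq_sum_integral_pieces (m := m) hg]
  exact Finset.sum_le_sum fun j hj => h j (Finset.mem_range.1 hj)

namespace IsSpline

lemma memL2 (hu : IsSpline m p u) : MemL2 u :=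
  memLp_restrict_Ioo_of_continuous hu.continuous 0 1

lemma eq_zero_of_l2normSq_eq_zero (hu : IsSpline m p u) (h : l2normSq u = 0) : u = 0 :=
  hu.eq_zero_of_eqOn_Icc (eqOn_zero_of_l2normSq_eq_zero hu.continuous h)

lemma exists_continuous_abs_deriv_le (hu : IsSpline m p u) :
    ∃ g : ℝ → ℝ, Continuous g ∧ ∀ x ∉ knots m, ‖deriv u x‖ ≤ g x := by
  choose q _ _ hq using fun j : Fin m => hu.exists_eventuallyEq j.2
  refine ⟨fun x => ∑ j, ‖(q j).derivative.eval x‖,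
    continuous_finsetSum _ fun j _ => (q j).derivative.continuous.norm, fun x hx => ?_⟩
  have hj : pieceIndex m x < m := pieceIndex_lt x
  rw [(hq ⟨_, hj⟩ x (pieceSet_mem_nhds_of_notMem_knots hj (mem_pieceSet_pieceIndex x) hx)).deriv_eq,
    Polynomial.deriv]
  exact Finset.single_le_sum (f := fun j => ‖(q j).derivative.eval x‖)
    (fun _ _ => norm_nonneg _) (Finset.mem_univ _)

lemma isH1On (hu : IsSpline m p u) : IsH1On (Ioo 0 1) u where
  continuous := hu.continuous
  countable_not_differentiableAt :=
    (countable_knots m).mono fun x hx => not_not.1 fun h => hx (hu.differentiableAt h)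
  memLp_deriv := by
    obtain ⟨g, hg, hle⟩ := hu.exists_continuous_abs_deriv_le
    refine (memLp_restrict_Ioo_of_continuous hg 0 1).mono'
      (measurable_deriv u).aestronglyMeasurable (ae_restrict_of_ae ?_)
    filter_upwards [(countable_knots m).ae_notMem volume] with x hx using hle x hx

end IsSpline

end SplineWeakDerivative

section ParitySplines

variable {m p : ℕ} [NeZero m] {b : Bool} {u : ℝ → ℝ}

/-- The splines of degree `p` whose derivatives of order `< p` and of parity `b` (`false` for
even, `true` for odd) vanish at both endpoints. The odd one is `S₀`; differentiation exchanges
the two parities, which is why both are needed. -/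
def paritySplines (b : Bool) (m p : ℕ) [NeZero m] : Submodule ℝ (ℝ → ℝ) where
  carrier := {u | IsSpline m p u ∧ ∀ k < p, k.bodd = b →
    iteratedDeriv k u 0 = 0 ∧ iteratedDeriv k u 1 = 0}
  zero_mem' := ⟨(splines m p).zero_mem, fun k _ _ => by simp⟩
  add_mem' := by
    rintro u v ⟨hu, hu'⟩ ⟨hv, hv'⟩
    have hadd (k : ℕ) {x : ℝ} (hx : x ∉ Ioo (0 : ℝ) 1) :
        iteratedDeriv k (u + v) x = iteratedDeriv k u x + iteratedDeriv k v x :=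
      iteratedDeriv_add (hu.contDiffAt_of_notMem_Ioo hx k) (hv.contDiffAt_of_notMem_Ioo hx k)
    refine ⟨(splines m p).add_mem hu hv, fun k hk hkb => ?_⟩
    rw [hadd k (by simp), hadd k (by simp)]
    simp [hu' k hk hkb, hv' k hk hkb]
  smul_mem' := by
    rintro c u ⟨hu, hu'⟩
    have hsmul (k : ℕ) {x : ℝ} (hx : x ∉ Ioo (0 : ℝ) 1) :
        iteratedDeriv k (c • u) x = c • iteratedDeriv k u x :=
      iteratedDeriv_const_smul (hu.contDiffAt_of_notMem_Ioo hx k) c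
    refine ⟨(splines m p).smul_mem c hu, fun k hk hkb => ?_⟩
    rw [hsmul k (by simp), hsmul k (by simp)]
    simp [hu' k hk hkb]

lemma paritySplines_le_splines : paritySplines b m p ≤ splines m p := fun _ hu => hu.1

instance : FiniteDimensional ℝ (paritySplines b m p) :=
  Submodule.finiteDimensional_of_le paritySplines_le_splines

lemma mem_paritySplines_true : u ∈ paritySplines true m p ↔ IsSpline0 m p u := by
  refine and_congr_right fun _ => ⟨fun h l hl => h _ hl (by simp), fun h k hk hkb => ?_⟩
  have hodd : k = 2 * k.div2 + 1 := by
    have := Nat.bodd_add_div2 k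
    rw [hkb] at this
    simp only [Bool.toNat_true] at this
    omega
  rw [hodd] at hk ⊢
  exact h _ hk

lemma const_mem_paritySplines_true (c : ℝ) : (fun _ => c) ∈ paritySplines true m p :=
  ⟨isSpline_const c, fun k _ hkb => by
    have hk : k ≠ 0 := by rintro rfl; simp at hkb
    simp [iteratedDeriv_const, hk]⟩

lemma deriv_mem_paritySplines (hu : u ∈ paritySplines b m (p + 2)) :
    deriv u ∈ paritySplines (!b) m (p + 1) := by
  refine ⟨hu.1.deriv, fun k hk hkb => ?_⟩
  rw [← iteratedDeriv_succ']
  exact hu.2 (k + 1) (by omega) (by simp [hkb])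

lemma mem_paritySplines_of_deriv (hu : IsSpline m (p + 2) u)
    (hd : deriv u ∈ paritySplines (!b) m (p + 1)) (hbd : b = false → u 0 = 0 ∧ u 1 = 0) :
    u ∈ paritySplines b m (p + 2) := by
  refine ⟨hu, fun k hk hkb => ?_⟩
  cases k with
  | zero => simpa using hbd (by simpa using hkb.symm)
  | succ k =>
    rw [iteratedDeriv_succ']
    exact hd.2 k (by omega) (by simp [← hkb])

lemma mul_deriv_eq_zero_of_mem_paritySplines (hu : u ∈ paritySplines b m (p + 2)) :
    u 0 * deriv u 0 = 0 ∧ u 1 * deriv u 1 = 0 := by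
  cases b
  · have h := hu.2 0 (by omega) rfl
    simp only [iteratedDeriv_zero] at h
    simp [h]
  · have h := hu.2 1 (by omega) rfl
    simp only [iteratedDeriv_one] at h
    simp [h]

end ParitySplines

section InverseInequality

variable {m p : ℕ} {u : ℝ → ℝ}

lemma integral_affine_sq (k s a b : ℝ) :
    ∫ x in a..b, (k + s * (x - (a + b) / 2)) ^ 2 = k ^ 2 * (b - a) + s ^ 2 * (b - a) ^ 3 / 12 := by
  have hderiv (x : ℝ) : HasDerivAt (fun x => k ^ 2 * x + k * s * (x - (a + b) / 2) ^ 2 +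
      s ^ 2 / 3 * (x - (a + b) / 2) ^ 3) ((k + s * (x - (a + b) / 2)) ^ 2) x := by
    have hx : HasDerivAt (fun x : ℝ => x - (a + b) / 2) 1 x := (hasDerivAt_id x).sub_const _
    refine ((((hasDerivAt_id x).const_mul (k ^ 2)).add ((hx.pow 2).const_mul (k * s))).add
      ((hx.pow 3).const_mul (s ^ 2 / 3))).congr_deriv ?_
    simp
    ring
  rw [intervalIntegral.integral_eq_sub_of_hasDerivAt (fun x _ => hderiv x)
    (Continuous.intervalIntegrable (by fun_prop) a b)]
  ring

lemma sq_slope_mul_le_integral_affine_sq {a b : ℝ} (hab : a ≤ b) (c s : ℝ) :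
    s ^ 2 * (b - a) ^ 3 ≤ 12 * ∫ x in a..b, (c + s * x) ^ 2 := by
  have hcenter : (fun x => (c + s * x) ^ 2) =
      fun x => (c + s * ((a + b) / 2) + s * (x - (a + b) / 2)) ^ 2 := by
    ext x
    ring
  rw [hcenter, integral_affine_sq]
  nlinarith [mul_nonneg (sq_nonneg (c + s * ((a + b) / 2))) (sub_nonneg.2 hab)]

lemma le_of_sq_le_mul {x y : ℝ} (hx : 0 ≤ x) (hy : 0 ≤ y) (h : x ^ 2 ≤ y * x) : x ≤ y := by
  obtain rfl | hx := hx.eq_or_lt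
  · exact hy
  · exact le_of_mul_le_mul_right (by linarith) hx

lemma IsSpline.exists_eqOn_affine (hu : IsSpline m 1 u) {j : ℕ} (hj : j < m) :
    ∃ s c : ℝ, EqOn u (fun x => c + s * x) (Ioo ((j : ℝ) / m) (((j : ℝ) + 1) / m)) ∧
      EqOn (deriv u) (fun _ => s) (Ioo ((j : ℝ) / m) (((j : ℝ) + 1) / m)) := by
  obtain ⟨q, hdeg, hq, hnhds⟩ := hu.exists_eventuallyEq hj
  obtain ⟨s, c, rfl⟩ := Polynomial.exists_eq_X_add_C_of_natDegree_le_one hdeg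
  refine ⟨s, c, fun x hx => ?_, fun x hx => ?_⟩
  · simp [hq x (Icc_subset_pieceSet hj (Ioo_subset_Icc_self hx)), add_comm]
  · have hx' := Filter.mem_of_superset (Icc_mem_nhds hx.1 hx.2) (Icc_subset_pieceSet hj)
    rw [(hnhds x hx').deriv_eq, Polynomial.deriv]
    simp

variable [NeZero m]

lemma IsSpline.h1semiSq_le_of_degree_one (hu : IsSpline m 1 u) :
    h1semiSq u ≤ 12 * (m : ℝ) ^ 2 * l2normSq u := by
  rw [h1semiSq, l2normSq, ← integral_const_mul]
  refine integral_le_integral_of_pieces (m := m) hu.isH1On.memLp_deriv.integrable_sq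
    (hu.memL2.integrable_sq.const_mul _) fun j hj => ?_
  obtain ⟨s, c, hq, hs⟩ := hu.exists_eqOn_affine hj
  set a := (j : ℝ) / m
  set b := ((j : ℝ) + 1) / m
  have hab : a ≤ b := (div_lt_add_one_div j).le
  have hderiv : ∫ x in Ioo a b, deriv u x ^ 2 = s ^ 2 * (b - a) := by
    rw [setIntegral_congr_fun (g := fun _ => s ^ 2) measurableSet_Ioo fun x hx => by
      simp only [hs hx]]
    simp [hab, mul_comm]
  have hvalue : ∫ x in Ioo a b, u x ^ 2 = ∫ x in a..b, (c + s * x) ^ 2 := by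
    rw [← setIntegral_Ioo_eq_intervalIntegral _ hab]
    refine setIntegral_congr_fun measurableSet_Ioo fun x hx => ?_
    simp only [hq hx]
  have hmab : (m : ℝ) * (b - a) = 1 := by
    have : (m : ℝ) ≠ 0 := NeZero.ne _
    simp only [a, b]
    field_simp
    ring
  rw [hderiv, integral_const_mul, hvalue]
  calc s ^ 2 * (b - a) = (m : ℝ) ^ 2 * (s ^ 2 * (b - a) ^ 3) := by
        linear_combination (-s ^ 2 * (b - a) * (m * (b - a) + 1)) * hmab
    _ ≤ (m : ℝ) ^ 2 * (12 * ∫ x in a..b, (c + s * x) ^ 2) :=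
        mul_le_mul_of_nonneg_left (sq_slope_mul_le_integral_affine_sq hab c s) (sq_nonneg _)
    _ = 12 * (m : ℝ) ^ 2 * ∫ x in a..b, (c + s * x) ^ 2 := by ring

lemma h1semiSq_le_of_mem_paritySplines {b : Bool} (hu : u ∈ paritySplines b m (p + 1)) :
    h1semiSq u ≤ 12 * (m : ℝ) ^ 2 * l2normSq u := by
  induction p generalizing b u with
  | zero => exact hu.1.h1semiSq_le_of_degree_one
  | succ p ih =>
    have hu' := deriv_mem_paritySplines hu
    have hgreen := hu.1.isH1On.ip0_deriv_add_ip0_deriv hu'.1.isH1On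
    obtain ⟨h0, h1⟩ := mul_deriv_eq_zero_of_mem_paritySplines hu
    rw [h0, h1, ip0_self, ← h1semiSq_eq_l2normSq_deriv] at hgreen
    refine le_of_sq_le_mul (h1semiSq_nonneg u)
      (mul_nonneg (by positivity) (l2normSq_nonneg u)) ?_
    calc h1semiSq u ^ 2 = ip0 u (deriv (deriv u)) ^ 2 := by
          rw [eq_neg_of_add_eq_zero_left (hgreen.trans (sub_zero 0)), neg_sq]
      _ ≤ l2normSq u * h1semiSq (deriv u) := sq_ip0_le hu.1.memL2 hu'.1.isH1On.memLp_deriv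
      _ ≤ l2normSq u * (12 * (m : ℝ) ^ 2 * l2normSq (deriv u)) := by
          gcongr
          · exact l2normSq_nonneg u
          · exact ih hu'
      _ = 12 * (m : ℝ) ^ 2 * l2normSq u * h1semiSq u := by
          rw [h1semiSq_eq_l2normSq_deriv]
          ring

end InverseInequality

section Interpolation

variable {m : ℕ} [NeZero m] {b : Bool} {e u w : ℝ → ℝ}

lemma mem_paritySplines_one :
    u ∈ paritySplines b m 1 ↔ IsSpline m 1 u ∧ (b = false → u 0 = 0 ∧ u 1 = 0) := by
  refine and_congr_right fun _ => ⟨fun h hb => ?_, fun h k hk hkb => ?_⟩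
  · simpa using h 0 one_pos (by simp [hb])
  · obtain rfl : k = 0 := by omega
    simpa using h (by simpa using hkb.symm)

lemma exists_spline_interpolating (u : ℝ → ℝ) :
    ∃ w, IsSpline m 1 w ∧ ∀ j ≤ m, w ((j : ℝ) / m) = u ((j : ℝ) / m) := by
  have hm : (m : ℝ) ≠ 0 := NeZero.ne _
  let l (j : ℕ) (x : ℝ) : ℝ :=
    u ((j : ℝ) / m) + m * (u (((j : ℝ) + 1) / m) - u ((j : ℝ) / m)) * (x - (j : ℝ) / m)
  have hleft (j : ℕ) : l j ((j : ℝ) / m) = u ((j : ℝ) / m) := by simp [l]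
  have hright (j : ℕ) : l j (((j : ℝ) + 1) / m) = u (((j : ℝ) + 1) / m) := by
    simp only [l]
    field_simp
    ring
  have hpiece {j : ℕ} (hj : j < m) := eqOn_pieceSet_of_agree (m := m) (l := l)
    (fun i => by simpa [hright] using (hleft (i + 1)).symm) hj
  refine ⟨fun x => l (pieceIndex m x) x, isSpline_one_of_polynomial_pieces fun j hj =>
    ⟨.C (u ((j : ℝ) / m)) + .C (m * (u (((j : ℝ) + 1) / m) - u ((j : ℝ) / m))) *
      (.X - .C ((j : ℝ) / m)), by compute_degree, fun x hx => ?_⟩, fun j hj => ?_⟩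
  · exact (hpiece hj hx).trans (by simp [l])
  · obtain _ | i := j
    · exact (hpiece (NeZero.pos m) (Icc_subset_pieceSet (NeZero.pos m)
        (left_mem_Icc.2 (div_lt_add_one_div 0).le))).trans (hleft 0)
    · rw [Nat.cast_succ]
      exact (hpiece hj (Icc_subset_pieceSet hj
        (right_mem_Icc.2 (div_lt_add_one_div i).le))).trans (hright i)

lemma IsH1On.l2normSq_le_of_eq_zero_on_knots (he : IsH1On (Ioo 0 1) e)
    (h0 : ∀ j ≤ m, e ((j : ℝ) / m) = 0) : l2normSq e ≤ (1 / (m : ℝ)) ^ 2 * h1semiSq e := by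
  rw [l2normSq, h1semiSq, ← integral_const_mul]
  refine integral_le_integral_of_pieces (m := m) (he.memLp 0 1).integrable_sq
    (he.memLp_deriv.integrable_sq.const_mul _) fun j hj => ?_
  have hsub := (Ioo_subset_Ioo_iff (div_lt_add_one_div j)).2
    ((Icc_subset_Icc_iff (div_lt_add_one_div (m := m) j).le).1 (Icc_div_subset_Icc_zero_one hj))
  have hpoincare := (he.mono hsub).integral_sq_le_of_eq_zero (div_lt_add_one_div j).le (h0 j hj.le)
  rwa [← sub_div, add_sub_cancel_left, ← integral_const_mul] at hpoincare

lemma IsH1On.ip0_deriv_eq_zero_of_eq_zero_on_knots (he : IsH1On (Ioo 0 1) e)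
    (h0 : ∀ j ≤ m, e ((j : ℝ) / m) = 0) (hw : IsSpline m 1 w) :
    ip0 (deriv e) (deriv w) = 0 := by
  refine (integral_eq_sum_integral_pieces (m := m)
    (he.memLp_deriv.integrable_mul hw.isH1On.memLp_deriv)).trans ?_
  refine Finset.sum_eq_zero fun j hj => ?_
  rw [Finset.mem_range] at hj
  obtain ⟨s, -, -, hs⟩ := hw.exists_eqOn_affine hj
  have hab := (div_lt_add_one_div (m := m) j).le
  have hsub := (Ioo_subset_Ioo_iff (div_lt_add_one_div j)).2
    ((Icc_subset_Icc_iff hab).1 (Icc_div_subset_Icc_zero_one hj))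
  have hsucc := h0 (j + 1) hj
  rw [Nat.cast_succ] at hsucc
  rw [setIntegral_congr_fun (g := fun x => deriv e x * s) measurableSet_Ioo
    fun x hx => by simp only [Pi.mul_apply, hs hx], integral_mul_const,
    setIntegral_Ioo_eq_intervalIntegral _ hab, (he.mono hsub).intervalIntegral_deriv hab,
    hsucc, h0 j hj.le, sub_zero, zero_mul]

end Interpolation

section Approximation

variable {m p : ℕ} [NeZero m] {b : Bool} {e u w φ ψ : ℝ → ℝ}

lemma h1semiSq_sub_add_h1semiSq (hu : IsH1On (Ioo 0 1) u) (hw : IsH1On (Ioo 0 1) w)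
    (horth : ip0 (deriv (u - w)) (deriv w) = 0) :
    h1semiSq (u - w) + h1semiSq w = h1semiSq u := by
  have h := h1semiSq_add (hu.sub hw) hw
  rw [sub_add_cancel, horth] at h
  linarith

/-- Aubin–Nitsche duality: `φ` solves the dual problem `φ' = e`. -/
lemma IsH1On.l2normSq_le_of_dual_approx (he : IsH1On (Ioo 0 1) e) (hφ : IsH1On (Ioo 0 1) φ)
    (hdual : deriv φ = e) (hbd : e 1 * φ 1 = e 0 * φ 0) (hψ : MemL2 ψ)
    (horth : ip0 (deriv e) ψ = 0) {C : ℝ} (hC : 0 ≤ C)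
    (happrox : l2normSq (φ - ψ) ≤ C * l2normSq e) : l2normSq e ≤ C * h1semiSq e := by
  have hgreen : ip0 (deriv e) φ + l2normSq e = 0 := by
    have h := he.ip0_deriv_add_ip0_deriv hφ
    rwa [hdual, ip0_self, hbd, sub_self] at h
  have hnorm : l2normSq e = -ip0 (deriv e) (φ - ψ) := by
    rw [ip0_sub_right he.memLp_deriv (hφ.memLp 0 1) hψ, horth]
    linarith
  refine le_of_sq_le_mul (l2normSq_nonneg e) (mul_nonneg hC (h1semiSq_nonneg e)) ?_
  calc l2normSq e ^ 2 = ip0 (deriv e) (φ - ψ) ^ 2 := by rw [hnorm, neg_sq]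
    _ ≤ h1semiSq e * l2normSq (φ - ψ) := sq_ip0_le he.memLp_deriv ((hφ.memLp 0 1).sub hψ)
    _ ≤ h1semiSq e * (C * l2normSq e) := by
        gcongr
        exact h1semiSq_nonneg e
    _ = C * h1semiSq e * l2normSq e := by ring

lemma exists_const_integral_sub_primitive_eq_zero (hu : Continuous u) (hw : Continuous w) :
    ∃ c : ℝ, ∫ x in (0 : ℝ)..1, (u x - (c + ∫ t in (0 : ℝ)..x, w t)) = 0 := by
  have hcont : Continuous fun x => u x - ∫ t in (0 : ℝ)..x, w t :=
    hu.sub (intervalIntegral.continuous_primitive (fun _ _ => hw.intervalIntegrable _ _) 0)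
  refine ⟨∫ x in (0 : ℝ)..1, (u x - ∫ t in (0 : ℝ)..x, w t), ?_⟩
  simp only [← sub_sub, sub_right_comm (u _)]
  rw [intervalIntegral.integral_sub (hcont.intervalIntegrable 0 1) (by simp)]
  simp

lemma exists_mem_paritySplines_deriv_orthogonal (hu : IsH1On (Ioo 0 1) u)
    (hbd : b = false → u 0 = 0 ∧ u 1 = 0) :
    ∃ w ∈ paritySplines b m (p + 2),
      (∀ z ∈ paritySplines (!b) m (p + 1), ip0 (deriv (u - w)) z = 0) ∧
      (b = true → ∫ x in (0 : ℝ)..1, (u - w) x = 0) := by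
  obtain ⟨q, hq, hproj⟩ := exists_mem_forall_integral_sub_mul_eq_zero (paritySplines (!b) m (p + 1))
    (fun v hv => hv.1.memL2) hu.memLp_deriv
  have hqcont := hq.1.continuous
  have horth (c : ℝ) (z) (hz : z ∈ paritySplines (!b) m (p + 1)) :
      ip0 (deriv (u - fun x => c + ∫ t in (0 : ℝ)..x, q t)) z = 0 := by
    rw [ip0_congr_ae (hu.deriv_sub_ae (.primitive hqcont 0 1 c)), deriv_primitive hqcont]
    exact hproj z hz
  have hmem (c : ℝ) (hbd : b = false → c = 0 ∧ ∫ t in (0 : ℝ)..1, q t = 0) :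
      (fun x => c + ∫ t in (0 : ℝ)..x, q t) ∈ paritySplines b m (p + 2) :=
    mem_paritySplines_of_deriv (hq.1.primitive c) (by rwa [deriv_primitive hqcont])
      fun hb => by simp [hbd hb]
  cases b
  · have hqint : ∫ t in (0 : ℝ)..1, q t = 0 := by
      have h := hproj _ (const_mem_paritySplines_true 1)
      simp only [Pi.sub_apply, mul_one] at h
      rw [integral_sub (hu.memLp_deriv.integrable one_le_two)
        (hq.1.memL2.integrable one_le_two), setIntegral_Ioo_eq_intervalIntegral _ zero_le_one,
        setIntegral_Ioo_eq_intervalIntegral _ zero_le_one,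
        hu.intervalIntegral_deriv zero_le_one] at h
      linarith [hbd rfl]
    exact ⟨_, hmem 0 fun _ => ⟨rfl, hqint⟩, horth 0, by simp⟩
  · obtain ⟨c, hc⟩ := exists_const_integral_sub_primitive_eq_zero hu.continuous hqcont
    exact ⟨_, hmem c (by simp), horth c, fun _ => hc⟩

lemma exists_mem_paritySplines_approx (hu : IsH1On (Ioo 0 1) u)
    (hbd : b = false → u 0 = 0 ∧ u 1 = 0) :
    ∃ w ∈ paritySplines b m (p + 1), ip0 (deriv (u - w)) (deriv w) = 0 ∧
      l2normSq (u - w) ≤ (1 / (m : ℝ)) ^ 2 * h1semiSq (u - w) := by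
  induction p generalizing b u with
  | zero =>
    obtain ⟨w, hw, hknots⟩ := exists_spline_interpolating (m := m) u
    have he := hu.sub hw.isH1On
    have he0 (j : ℕ) (hj : j ≤ m) : (u - w) ((j : ℝ) / m) = 0 := by simp [hknots j hj]
    refine ⟨w, mem_paritySplines_one.2 ⟨hw, fun hb => ?_⟩,
      he.ip0_deriv_eq_zero_of_eq_zero_on_knots he0 hw, he.l2normSq_le_of_eq_zero_on_knots he0⟩
    have hw0 := hknots 0 (Nat.zero_le m)
    have hw1 := hknots m le_rfl
    simp only [Nat.cast_zero, zero_div, div_self (NeZero.ne (m : ℝ))] at hw0 hw1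
    exact ⟨hw0.trans (hbd hb).1, hw1.trans (hbd hb).2⟩
  | succ p ih =>
    obtain ⟨w, hw, horth, hmean⟩ :=
      exists_mem_paritySplines_deriv_orthogonal (m := m) (p := p) hu hbd
    have he := hu.sub hw.1.isH1On
    let φ : ℝ → ℝ := fun x => 0 + ∫ t in (0 : ℝ)..x, (u - w) t
    have hφ : IsH1On (Ioo 0 1) φ := .primitive he.continuous 0 1 0
    have hφ0 : φ 0 = 0 := by simp [φ]
    have hφ1 (hb : b = true) : φ 1 = 0 := by simpa [φ] using hmean hb
    have hdual : deriv φ = u - w := deriv_primitive he.continuous 0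
    obtain ⟨ψ, hψ, hψorth, hψapprox⟩ := ih (b := !b) hφ fun hb => ⟨hφ0, hφ1 (by simpa using hb)⟩
    refine ⟨w, hw, horth _ (deriv_mem_paritySplines hw),
      he.l2normSq_le_of_dual_approx hφ hdual ?_ hψ.1.memL2 (horth ψ hψ) (sq_nonneg _)
        (hψapprox.trans ?_)⟩
    · cases b
      · have hw1 : w 1 = 0 := by simpa using (hw.2 0 (by omega) rfl).2
        simp [hφ0, hw1, hbd rfl]
      · simp [hφ0, hφ1 rfl]
    · have hpyth := h1semiSq_sub_add_h1semiSq hφ hψ.1.isH1On hψorth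
      rw [← hdual, ← h1semiSq_eq_l2normSq_deriv]
      gcongr
      linarith [h1semiSq_nonneg ψ]

end Approximation

section UnivariateStability

variable {m p : ℕ} [NeZero m] {u₀ u₁ : ℝ → ℝ}

lemma h1semiSq_sub_le_of_approx {w : ℝ → ℝ} (h₀ : IsSpline0 m (p + 1) u₀)
    (h₁ : IsSpline1 m (p + 1) u₁) (hw : w ∈ paritySplines true m (p + 1))
    (happrox : l2normSq (u₀ + u₁ - w) ≤ (1 / (m : ℝ)) ^ 2 * h1semiSq (u₀ + u₁ - w)) :
    h1semiSq (u₀ - w) ≤ 12 * h1semiSq (u₀ + u₁ - w) := by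
  have hz := (paritySplines true m (p + 1)).sub_mem (mem_paritySplines_true.2 h₀) hw
  have hpyth : l2normSq (u₀ + u₁ - w) = l2normSq u₁ + l2normSq (u₀ - w) := by
    rw [add_sub_right_comm, add_comm (u₀ - w), l2normSq_add h₁.1.memL2 hz.1.memL2,
      h₁.2 _ (mem_paritySplines_true.1 hz)]
    ring
  have hm : (m : ℝ) ≠ 0 := NeZero.ne _
  calc h1semiSq (u₀ - w) ≤ 12 * (m : ℝ) ^ 2 * l2normSq (u₀ - w) :=
        h1semiSq_le_of_mem_paritySplines hz
    _ ≤ 12 * (m : ℝ) ^ 2 * ((1 / (m : ℝ)) ^ 2 * h1semiSq (u₀ + u₁ - w)) := by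
        gcongr
        linarith [l2normSq_nonneg u₁]
    _ = 12 * h1semiSq (u₀ + u₁ - w) := by field_simp

lemma h1semiSq_le_h1semiSq_add_of_isSpline0_of_isSpline1 (h₀ : IsSpline0 m (p + 1) u₀)
    (h₁ : IsSpline1 m (p + 1) u₁) :
    h1semiSq u₀ ≤ 24 * h1semiSq (u₀ + u₁) := by
  have hu : IsSpline m (p + 1) (u₀ + u₁) := (splines m (p + 1)).add_mem h₀.1 h₁.1
  obtain ⟨w, hw, horth, happrox⟩ := exists_mem_paritySplines_approx (m := m) (p := p) (b := true)
    hu.isH1On (by simp)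
  have hpyth := h1semiSq_sub_add_h1semiSq hu.isH1On hw.1.isH1On horth
  have hdiff := h1semiSq_sub_le_of_approx h₀ h₁ hw happrox
  have hsplit := h1semiSq_add_le (h₀.1.isH1On.sub hw.1.isH1On) hw.1.isH1On
  rw [sub_add_cancel] at hsplit
  linarith [h1semiSq_nonneg w]

lemma h1semiSq_add_h1semiSq_le (h₀ : IsSpline0 m (p + 1) u₀) (h₁ : IsSpline1 m (p + 1) u₁) :
    h1semiSq u₀ + h1semiSq u₁ ≤ 74 * h1semiSq (u₀ + u₁) := by
  have hu : IsSpline m (p + 1) (u₀ + u₁) := (splines m (p + 1)).add_mem h₀.1 h₁.1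
  have hle := h1semiSq_le_h1semiSq_add_of_isSpline0_of_isSpline1 h₀ h₁
  have hsub := h1semiSq_sub_le hu.isH1On h₀.1.isH1On
  rw [add_sub_cancel_left] at hsub
  linarith

end UnivariateStability

section LinearCombination

variable {X I : Type*} [MeasurableSpace X] {μ : Measure X} [Fintype I]

lemma integral_linearCombination_mul {f g : I → X → ℝ} (hf : ∀ i, MemLp (f i) 2 μ)
    (hg : ∀ i, MemLp (g i) 2 μ) (c c' : I → ℝ) :
    ∫ x, Fintype.linearCombination ℝ f c x * Fintype.linearCombination ℝ g c' x ∂μ =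
      ∑ i, ∑ j, c i * c' j * ∫ x, f i x * g j x ∂μ := by
  have hint (i j) : Integrable (fun x => c i * c' j * (f i x * g j x)) μ :=
    ((hf i).integrable_mul (hg j)).const_mul _
  have hcomm (i j x) : c i * f i x * (c' j * g j x) = c i * c' j * (f i x * g j x) :=
    mul_mul_mul_comm _ _ _ _
  simp only [Fintype.linearCombination_apply, Finset.sum_apply, Pi.smul_apply, smul_eq_mul,
    Finset.sum_mul_sum, hcomm]
  rw [integral_finsetSum _ fun i _ => integrable_finsetSum _ fun j _ => hint i j]
  refine Finset.sum_congr rfl fun i _ => ?_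
  rw [integral_finsetSum _ fun j _ => hint i j]
  exact Finset.sum_congr rfl fun j _ => integral_const_mul _ _

lemma IsH1On.h1semiSq_linearCombination {e : I → ℝ → ℝ} (he : ∀ i, IsH1On (Ioo 0 1) (e i))
    (y : I → ℝ) : h1semiSq (Fintype.linearCombination ℝ e y) =
      ∑ i, ∑ j, y i * y j * ip0 (deriv (e i)) (deriv (e j)) := by
  have hderiv : deriv (Fintype.linearCombination ℝ e y) =ᵐ[volume]
      Fintype.linearCombination ℝ (fun i => deriv (e i)) y := by
    filter_upwards [ae_all_iff.2 fun i => (he i).ae_differentiableAt] with x hx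
    simp only [Fintype.linearCombination_apply, Finset.sum_apply, Pi.smul_apply]
    rw [deriv_sum fun i _ => (hx i).const_smul _]
    simp [deriv_const_smul_field]
  rw [h1semiSq_eq_l2normSq_deriv, l2normSq_congr_ae hderiv, ← ip0_self]
  exact integral_linearCombination_mul (fun i => (he i).memLp_deriv) (fun i => (he i).memLp_deriv)
    y y

end LinearCombination

section FiberPart

variable {I J : Type*} [DecidableEq J]

/-- The part of a coefficient vector supported on the fiber of a colouring `σ` of the indices over
the colour `j`. -/
def fiberPart (σ : I → J) (j : J) : (I → ℝ) →ₗ[ℝ] (I → ℝ) where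
  toFun c i := if σ i = j then c i else 0
  map_add' c c' := by ext i; simp [ite_add_zero]
  map_smul' a c := by ext i; simp

lemma fiberPart_apply (σ : I → J) (j : J) (c : I → ℝ) (i : I) :
    fiberPart σ j c i = if σ i = j then c i else 0 := rfl

lemma sum_fiberPart [Fintype J] (σ : I → J) (c : I → ℝ) : ∑ j, fiberPart σ j c = c := by
  ext i
  simp [fiberPart_apply]

lemma sum_sum_fiberPart_sq [Fintype I] [Fintype J] (σ : I → J) (c : I → ℝ) :
    ∑ j, ∑ i, fiberPart σ j c i ^ 2 = ∑ i, c i ^ 2 := by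
  rw [Finset.sum_comm]
  simp [fiberPart_apply, ite_pow]

end FiberPart

section ComponentSplines

variable {m p : ℕ} {b : Bool} {u : ℝ → ℝ}

lemma IsSplineC.isSpline (hu : IsSplineC m p b u) : IsSpline m p u := by
  cases b
  exacts [hu.1, hu.1]

lemma ip0_eq_zero_of_ne {b' : Bool} {v : ℝ → ℝ} (hu : IsSplineC m p b u)
    (hv : IsSplineC m p b' v) (hne : b ≠ b') : ip0 u v = 0 := by
  cases b <;> cases b'
  · exact absurd rfl hne
  · exact (ip0_comm u v).trans (hv.2 u hu)
  · exact hu.2 v hv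
  · exact absurd rfl hne

variable [NeZero m]

/-- The components `S₀` (at `false`) and `S₁` (at `true`) of the spline space as subspaces. -/
def componentSplines (m p : ℕ) [NeZero m] : Bool → Submodule ℝ (ℝ → ℝ)
  | false => paritySplines true m p
  | true =>
    { carrier := {u | IsSpline1 m p u}
      zero_mem' := ⟨(splines m p).zero_mem, fun v _ => by simp [ip0]⟩
      add_mem' := fun {u w} hu hw => ⟨(splines m p).add_mem hu.1 hw.1, fun v hv => by
        rw [ip0_add_left hu.1.memL2 hw.1.memL2 hv.1.memL2, hu.2 v hv, hw.2 v hv, add_zero]⟩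
      smul_mem' := fun c u hu => ⟨(splines m p).smul_mem c hu.1, fun v hv => by
        rw [ip0_smul_left, hu.2 v hv, mul_zero]⟩ }

lemma mem_componentSplines : u ∈ componentSplines m p b ↔ IsSplineC m p b u := by
  cases b
  exacts [mem_paritySplines_true, Iff.rfl]

lemma componentSplines_le_splines : componentSplines m p b ≤ splines m p := fun _ hu =>
  (mem_componentSplines.1 hu).isSpline

instance : FiniteDimensional ℝ (componentSplines m p b) :=
  Submodule.finiteDimensional_of_le componentSplines_le_splines

lemma IsSpline.exists_isSpline0_add_isSpline1 (hu : IsSpline m p u) :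
    ∃ u₀ u₁, IsSpline0 m p u₀ ∧ IsSpline1 m p u₁ ∧ u₀ + u₁ = u := by
  obtain ⟨q, hq, hqorth⟩ := exists_mem_forall_integral_sub_mul_eq_zero (paritySplines true m p)
    (fun _ hv => hv.1.memL2) hu.memL2
  exact ⟨q, u - q, mem_paritySplines_true.1 hq, ⟨(splines m p).sub_mem hu hq.1,
    fun v hv => hqorth v (mem_paritySplines_true.2 hv)⟩, add_sub_cancel q u⟩

end ComponentSplines

section AdaptedBasis

/-- Orthonormality of a family of functions in `L²(0,1)`. -/
def IsL2Orthonormal {K : Type*} [DecidableEq K] (e : K → ℝ → ℝ) : Prop :=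
  ∀ k l, ip0 (e k) (e l) = if k = l then 1 else 0

/-- An `L²(0,1)`-orthonormal basis of the spline space adapted to the splitting `S = S₀ ⊕ S₁`: the
colour `τ k` tells in which of the two components the basis function `e k` lies. -/
structure IsAdaptedBasis {K : Type*} [Fintype K] [DecidableEq K] (m p : ℕ) (τ : K → Bool)
    (e : K → ℝ → ℝ) : Prop where
  isSplineC (k : K) : IsSplineC m p (τ k) (e k)
  orthonormal : IsL2Orthonormal e
  exists_linearCombination_fiberPart {b : Bool} {u : ℝ → ℝ} (hu : IsSplineC m p b u) :
    ∃ y : K → ℝ, Fintype.linearCombination ℝ e (fiberPart τ b y) = u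

variable {m p : ℕ} [NeZero m]

lemma exists_isAdaptedBasis (m p : ℕ) [NeZero m] :
    ∃ (n : Bool → ℕ) (e : (Σ b, Fin (n b)) → ℝ → ℝ), IsAdaptedBasis m p Sigma.fst e := by
  choose n e horth hspan using fun b => exists_orthonormal_span_range_eq (componentSplines m p b)
    (fun u hu => (componentSplines_le_splines hu).memL2)
    (fun u hu => (componentSplines_le_splines hu).eq_zero_of_l2normSq_eq_zero)
  have hmem (b i) : IsSplineC m p b (e b i) :=
    mem_componentSplines.1 (hspan b ▸ Submodule.subset_span (mem_range_self i))
  refine ⟨n, fun k => e k.1 k.2, fun k => hmem k.1 k.2, ?_, fun {b u} hu => ?_⟩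
  · rintro ⟨b, i⟩ ⟨b', j⟩
    obtain rfl | hne := eq_or_ne b b'
    · simpa [ip0] using horth b i j
    · rw [ip0_eq_zero_of_ne (hmem b i) (hmem b' j) hne, if_neg (by simp [hne])]
  · rw [← mem_componentSplines, ← hspan b, Submodule.mem_span_range_iff_exists_fun] at hu
    obtain ⟨y, rfl⟩ := hu
    refine ⟨fun k => if h : k.1 = b then y (h ▸ k.2) else 0, ?_⟩
    rw [Fintype.linearCombination_apply, Fintype.sum_sigma, Finset.sum_eq_single b]
    · simp [fiberPart_apply]
    · intro b' _ hne
      simp [fiberPart_apply, hne]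
    · simp

variable {K : Type*} [Fintype K] [DecidableEq K] {τ : K → Bool} {e : K → ℝ → ℝ}

namespace IsAdaptedBasis

lemma isH1On (he : IsAdaptedBasis m p τ e) (k : K) : IsH1On (Ioo 0 1) (e k) :=
  (he.isSplineC k).isSpline.isH1On

lemma exists_linearCombination (he : IsAdaptedBasis m p τ e) {u : ℝ → ℝ} (hu : IsSpline m p u) :
    ∃ y : K → ℝ, Fintype.linearCombination ℝ e y = u := by
  obtain ⟨u₀, u₁, h₀, h₁, rfl⟩ := hu.exists_isSpline0_add_isSpline1
  obtain ⟨y₀, hy₀⟩ := he.exists_linearCombination_fiberPart (b := false) h₀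
  obtain ⟨y₁, hy₁⟩ := he.exists_linearCombination_fiberPart (b := true) h₁
  exact ⟨_, (map_add _ _ _).trans (congrArg₂ _ hy₀ hy₁)⟩

lemma isSplineC_linearCombination_fiberPart (he : IsAdaptedBasis m p τ e) (b : Bool) (y : K → ℝ) :
    IsSplineC m p b (Fintype.linearCombination ℝ e (fiberPart τ b y)) := by
  rw [← mem_componentSplines, Fintype.linearCombination_apply]
  refine Submodule.sum_mem _ fun k _ => ?_
  rw [fiberPart_apply]
  split_ifs with hk
  · exact Submodule.smul_mem _ _ (mem_componentSplines.2 (hk ▸ he.isSplineC k))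
  · simp

lemma h1semiSq_le_sum_fiberPart (he : IsAdaptedBasis m p τ e) (y : K → ℝ) :
    h1semiSq (Fintype.linearCombination ℝ e y) ≤
      2 * ∑ b, h1semiSq (Fintype.linearCombination ℝ e (fiberPart τ b y)) := by
  have hH1 (b) := (he.isSplineC_linearCombination_fiberPart b y).isSpline.isH1On
  conv_lhs => rw [← sum_fiberPart τ y, map_sum, Fintype.sum_bool]
  rw [Fintype.sum_bool]
  exact h1semiSq_add_le (hH1 true) (hH1 false)

lemma sum_h1semiSq_fiberPart_le (he : IsAdaptedBasis m (p + 1) τ e) (y : K → ℝ) :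
    ∑ b, h1semiSq (Fintype.linearCombination ℝ e (fiberPart τ b y)) ≤
      74 * h1semiSq (Fintype.linearCombination ℝ e y) := by
  conv_rhs => rw [← sum_fiberPart τ y, map_sum, Fintype.sum_bool, add_comm]
  rw [Fintype.sum_bool, add_comm]
  exact h1semiSq_add_h1semiSq_le (he.isSplineC_linearCombination_fiberPart false y)
    (he.isSplineC_linearCombination_fiberPart true y)

end IsAdaptedBasis

end AdaptedBasis

section PureTensor

variable {d : ℕ} {f g : Fin d → ℝ → ℝ}

/-- The tensor product `f₁ ⊗ ⋯ ⊗ f_d` of univariate functions, as a function of `d` variables. -/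
def pureTensor (f : Fin d → ℝ → ℝ) : (Fin d → ℝ) → ℝ := fun x => ∏ j, f j (x j)

lemma volume_restrict_cube (d : ℕ) : (volume : Measure (Fin d → ℝ)).restrict (cube d) =
    Measure.pi fun _ => volume.restrict (Ioo (0 : ℝ) 1) := by
  rw [cube, volume_pi, Measure.restrict_pi_pi]

lemma ipd_pureTensor (f g : Fin d → ℝ → ℝ) :
    ipd d (pureTensor f) (pureTensor g) = ∏ j, ip0 (f j) (g j) := by
  simp only [ipd, pureTensor, ← Finset.prod_mul_distrib, volume_restrict_cube]
  exact integral_fintype_prod_eq_prod (𝕜 := ℝ) fun j t => f j t * g j t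

lemma memLp_pureTensor (hf : ∀ j, MemL2 (f j)) :
    MemLp (pureTensor f) 2 (volume.restrict (cube d)) := by
  rw [volume_restrict_cube]
  refine (memLp_two_iff_integrable_sq (Integrable.fintype_prod fun j =>
    (hf j).integrable one_le_two).aestronglyMeasurable).2 ?_
  simp only [← Finset.prod_pow]
  exact Integrable.fintype_prod fun j => (hf j).integrable_sq

lemma pureTensor_update_apply (f : Fin d → ℝ → ℝ) (i : Fin d) (g : ℝ → ℝ) (x : Fin d → ℝ) :
    pureTensor (Function.update f i g) x = g (x i) * ∏ j : {j // j ≠ i}, f j (x j) := by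
  rw [pureTensor, Fintype.prod_eq_mul_prod_subtype_ne _ i, Function.update_self]
  congr 1
  exact Finset.prod_congr rfl fun j _ => by rw [Function.update_of_ne j.2]

lemma pureTensor_apply_update (f : Fin d → ℝ → ℝ) (i : Fin d) (x : Fin d → ℝ) (t : ℝ) :
    pureTensor f (Function.update x i t) = f i t * ∏ j : {j // j ≠ i}, f j (x j) := by
  rw [pureTensor, Fintype.prod_eq_mul_prod_subtype_ne _ i, Function.update_self]
  congr 1
  exact Finset.prod_congr rfl fun j _ => by rw [Function.update_of_ne j.2]

lemma hasDerivAt_pureTensor_update {i : Fin d} {x : Fin d → ℝ}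
    (hf : DifferentiableAt ℝ (f i) (x i)) :
    HasDerivAt (fun t => pureTensor f (Function.update x i t))
      (pureTensor (Function.update f i (deriv (f i))) x) (x i) := by
  simp only [pureTensor_update_apply, pureTensor_apply_update]
  exact hf.hasDerivAt.mul_const _

end PureTensor

section Orthonormal

variable {K : Type*} [DecidableEq K] {e : K → ℝ → ℝ}

lemma IsL2Orthonormal.prod_ip0 {ι : Type*} [Fintype ι] (he : IsL2Orthonormal e) (κ l : ι → K) :
    ∏ j, ip0 (e (κ j)) (e (l j)) = if κ = l then 1 else 0 := by
  simp only [he _ _, Fintype.prod_ite_zero, Finset.prod_const_one, funext_iff]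

lemma IsL2Orthonormal.prod_ip0_update {d : ℕ} (he : IsL2Orthonormal e) (i : Fin d)
    (f : K → ℝ → ℝ) (k l : K) (ρ σ : {j // j ≠ i} → K) :
    ∏ j, ip0 (Function.update (fun _ => e) i f j ((Equiv.funSplitAt i K).symm (k, ρ) j))
        (Function.update (fun _ => e) i f j ((Equiv.funSplitAt i K).symm (l, σ) j)) =
      if ρ = σ then ip0 (f k) (f l) else 0 := by
  have hne (j : {j // j ≠ i}) (k : K) (ρ : {j // j ≠ i} → K) :
      Function.update (fun _ => e) i f j ((Equiv.funSplitAt i K).symm (k, ρ) j) = e (ρ j) := by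
    simp [j.2]
  rw [Fintype.prod_eq_mul_prod_subtype_ne _ i]
  simp only [hne, he.prod_ip0]
  simp

end Orthonormal

section TensorCombination

variable {d : ℕ} {K : Type*}

/-- The fiber of a coefficient tensor in direction `i`, the other indices being fixed to `ρ`. -/
def slice (i : Fin d) (ρ : {j // j ≠ i} → K) (c : (Fin d → K) → ℝ) : K → ℝ :=
  fun k => c ((Equiv.funSplitAt i K).symm (k, ρ))

lemma memL2_update {e f : K → ℝ → ℝ} (he : ∀ k, MemL2 (e k)) (hf : ∀ k, MemL2 (f k))
    (i j : Fin d) (k : K) : MemL2 (Function.update (fun _ => e) i f j k) := by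
  obtain rfl | hj := eq_or_ne j i <;> simp [*]

variable [Fintype K]

/-- The linear combination of the tensor products of the functions `F j k`, where `k` runs over
`K` in each direction `j`, with coefficient tensor `c`. -/
def tensorCombination (F : Fin d → K → ℝ → ℝ) : ((Fin d → K) → ℝ) →ₗ[ℝ] (Fin d → ℝ) → ℝ :=
  Fintype.linearCombination ℝ fun κ => pureTensor fun j => F j (κ j)

lemma pureTensor_linearCombination (e : K → ℝ → ℝ) (y : Fin d → K → ℝ) :
    pureTensor (fun j => Fintype.linearCombination ℝ e (y j)) =
      tensorCombination (fun _ => e) fun κ => ∏ j, y j (κ j) := by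
  ext x
  simp only [tensorCombination, pureTensor, Fintype.linearCombination_apply, Finset.sum_apply,
    Pi.smul_apply, smul_eq_mul, ← Finset.prod_mul_distrib]
  rw [Finset.prod_univ_sum, Fintype.piFinset_univ]

lemma memLp_tensorCombination {F : Fin d → K → ℝ → ℝ} (hF : ∀ j k, MemL2 (F j k))
    (c : (Fin d → K) → ℝ) : MemLp (tensorCombination F c) 2 (volume.restrict (cube d)) := by
  rw [tensorCombination, Fintype.linearCombination_apply]
  exact memLp_finsetSum' _ fun κ _ => (memLp_pureTensor fun j => hF j (κ j)).const_smul _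

lemma ipd_tensorCombination {F G : Fin d → K → ℝ → ℝ} (hF : ∀ j k, MemL2 (F j k))
    (hG : ∀ j k, MemL2 (G j k)) (c c' : (Fin d → K) → ℝ) :
    ipd d (tensorCombination F c) (tensorCombination G c') =
      ∑ κ, ∑ l, c κ * c' l * ∏ j, ip0 (F j (κ j)) (G j (l j)) := by
  simp only [← ipd_pureTensor]
  exact integral_linearCombination_mul (fun κ => memLp_pureTensor fun j => hF j (κ j))
    (fun κ => memLp_pureTensor fun j => hG j (κ j)) c c'

variable {e : K → ℝ → ℝ}

lemma pd_tensorCombination_ae (he : ∀ k, ∀ᵐ t, DifferentiableAt ℝ (e k) t)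
    (i : Fin d) (c : (Fin d → K) → ℝ) :
    pd d i (tensorCombination (fun _ => e) c) =ᵐ[volume]
      tensorCombination (Function.update (fun _ => e) i fun k => deriv (e k)) c := by
  filter_upwards [(Measure.quasiMeasurePreserving_eval (fun _ : Fin d => volume) i).ae
    (ae_all_iff.2 he)] with x hx
  have hupdate (κ : Fin d → K) :
      (fun j => Function.update (fun _ => e) i (fun k => deriv (e k)) j (κ j)) =
        Function.update (fun j => e (κ j)) i (deriv (e (κ i))) := by
    ext j
    obtain rfl | hj := eq_or_ne j i <;> simp [*]
  simp only [pd, tensorCombination, Fintype.linearCombination_apply, Finset.sum_apply,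
    Pi.smul_apply, smul_eq_mul, hupdate]
  exact (HasDerivAt.fun_sum fun κ _ => (hasDerivAt_pureTensor_update (hx (κ i))).const_mul _).deriv

variable [DecidableEq K]

lemma l2normSqD_tensorCombination (he : ∀ k, MemL2 (e k)) (horth : IsL2Orthonormal e)
    (c : (Fin d → K) → ℝ) : l2normSqD d (tensorCombination (fun _ => e) c) = ∑ κ, c κ ^ 2 := by
  have h := ipd_tensorCombination (fun _ : Fin d => he) (fun _ => he) c c
  simpa [ipd, l2normSqD, horth.prod_ip0, pow_two] using h

lemma ipd_tensorCombination_pureTensor (he : ∀ k, MemL2 (e k)) (horth : IsL2Orthonormal e)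
    (c : (Fin d → K) → ℝ) (κ : Fin d → K) :
    ipd d (tensorCombination (fun _ => e) c) (pureTensor fun j => e (κ j)) = c κ := by
  have hκ : pureTensor (fun j => e (κ j)) = tensorCombination (fun _ => e) (Pi.single κ 1) := by
    simp [tensorCombination]
  rw [hκ, ipd_tensorCombination (fun _ => he) (fun _ => he)]
  simp [horth.prod_ip0, Pi.single_apply]

lemma ipd_tensorCombination_update (he : ∀ k, MemL2 (e k)) (horth : IsL2Orthonormal e)
    {f : K → ℝ → ℝ} (hf : ∀ k, MemL2 (f k)) (i : Fin d) (c : (Fin d → K) → ℝ) :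
    ipd d (tensorCombination (Function.update (fun _ => e) i f) c)
        (tensorCombination (Function.update (fun _ => e) i f) c) =
      ∑ ρ, ∑ k, ∑ l, slice i ρ c k * slice i ρ c l * ip0 (f k) (f l) := by
  have hF := memL2_update he hf i
  rw [ipd_tensorCombination hF hF, ← (Equiv.funSplitAt i K).symm.sum_comp,
    Fintype.sum_prod_type_right]
  refine Finset.sum_congr rfl fun ρ _ => Finset.sum_congr rfl fun k _ => ?_
  rw [← (Equiv.funSplitAt i K).symm.sum_comp, Fintype.sum_prod_type]
  simp only [horth.prod_ip0_update, mul_ite, mul_zero, Finset.sum_ite_eq, Finset.mem_univ, if_true,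
    slice]

/- Orthonormality of the basis in the directions other than `i` decouples the one-dimensional
fibers. -/
lemma h1semiSqD_tensorCombination (he : ∀ k, IsH1On (Ioo 0 1) (e k)) (horth : IsL2Orthonormal e)
    (c : (Fin d → K) → ℝ) : h1semiSqD d (tensorCombination (fun _ => e) c) =
      ∑ i, ∑ ρ, h1semiSq (Fintype.linearCombination ℝ e (slice i ρ c)) := by
  have hF := memL2_update (d := d) (fun k => (he k).memLp 0 1) fun k => (he k).memLp_deriv
  have hpd : ∀ᵐ x ∂volume.restrict (cube d), ∀ i,
      pd d i (tensorCombination (fun _ => e) c) x =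
        tensorCombination (Function.update (fun _ => e) i fun k => deriv (e k)) c x :=
    ae_restrict_of_ae <| ae_all_iff.2 fun i =>
      pd_tensorCombination_ae (fun k => (he k).ae_differentiableAt) i c
  rw [h1semiSqD, integral_congr_ae (hpd.mono fun x hx =>
      Finset.sum_congr rfl fun i _ => congrArg (· ^ 2) (hx i)),
    integral_finsetSum _ fun i _ => (memLp_tensorCombination (hF i) c).integrable_sq]
  refine Finset.sum_congr rfl fun i _ => ?_
  simp only [IsH1On.h1semiSq_linearCombination he, pow_two]
  exact ipd_tensorCombination_update (fun k => (he k).memLp 0 1) horth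
    (fun k => (he k).memLp_deriv) i c

end TensorCombination

section Blocks

variable {d : ℕ} {K : Type*} {τ : K → Bool}

lemma slice_fiberPart (τ : K → Bool) (i : Fin d) (ρ : {j // j ≠ i} → K) (b : Bool)
    (β : {j // j ≠ i} → Bool) (c : (Fin d → K) → ℝ) :
    slice i ρ (fiberPart (τ ∘ ·) ((Equiv.funSplitAt i Bool).symm (b, β)) c) =
      if τ ∘ ρ = β then fiberPart τ b (slice i ρ c) else 0 := by
  have hsplit (k : K) : Equiv.funSplitAt i Bool (τ ∘ (Equiv.funSplitAt i K).symm (k, ρ)) =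
      (τ k, τ ∘ ρ) := Prod.ext (by simp) (funext fun j => by simp [j.2])
  ext k
  by_cases h : τ ∘ ρ = β <;>
    simp [slice, fiberPart_apply, Equiv.eq_symm_apply, hsplit, h]

variable [Fintype K] {e : K → ℝ → ℝ}

lemma sum_h1semiSq_slice_fiberPart (e : K → ℝ → ℝ) (τ : K → Bool) (i : Fin d)
    (ρ : {j // j ≠ i} → K) (c : (Fin d → K) → ℝ) :
    ∑ α, h1semiSq (Fintype.linearCombination ℝ e (slice i ρ (fiberPart (τ ∘ ·) α c))) =
      ∑ b, h1semiSq (Fintype.linearCombination ℝ e (fiberPart τ b (slice i ρ c))) := by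
  rw [← (Equiv.funSplitAt i Bool).symm.sum_comp, Fintype.sum_prod_type]
  have hzero : h1semiSq 0 = 0 := by simp [h1semiSq]
  simp only [slice_fiberPart, apply_ite, map_zero, hzero, Finset.sum_ite_eq, Finset.mem_univ,
    if_true]

variable [DecidableEq K]

lemma sum_h1semiSqD_fiberPart (he : ∀ k, IsH1On (Ioo 0 1) (e k)) (horth : IsL2Orthonormal e)
    (τ : K → Bool) (c : (Fin d → K) → ℝ) :
    ∑ α, h1semiSqD d (tensorCombination (fun _ => e) (fiberPart (τ ∘ ·) α c)) =
      ∑ i, ∑ ρ, ∑ b, h1semiSq (Fintype.linearCombination ℝ e (fiberPart τ b (slice i ρ c))) := by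
  simp only [h1semiSqD_tensorCombination he horth]
  rw [Finset.sum_comm]
  refine Finset.sum_congr rfl fun i _ => ?_
  rw [Finset.sum_comm]
  exact Finset.sum_congr rfl fun ρ _ => sum_h1semiSq_slice_fiberPart e τ i ρ c

lemma sum_l2normSqD_fiberPart (he : ∀ k, MemL2 (e k)) (horth : IsL2Orthonormal e)
    (τ : K → Bool) (c : (Fin d → K) → ℝ) :
    ∑ α, l2normSqD d (tensorCombination (fun _ => e) (fiberPart (τ ∘ ·) α c)) =
      l2normSqD d (tensorCombination (fun _ => e) c) := by
  simp only [l2normSqD_tensorCombination he horth, sum_sum_fiberPart_sq]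

namespace IsAdaptedBasis

variable {m p : ℕ}

lemma exists_tensorCombination_fiberPart (he : IsAdaptedBasis m p τ e) {α : Fin d → Bool}
    {v : (Fin d → ℝ) → ℝ} (hv : v ∈ TensorSplineSub d m p α) :
    ∃ c, tensorCombination (fun _ => e) (fiberPart (τ ∘ ·) α c) = v := by
  suffices TensorSplineSub d m p α ≤
    LinearMap.range (tensorCombination (fun _ => e) ∘ₗ fiberPart (τ ∘ ·) α) from this hv
  refine Submodule.span_le.2 ?_
  rintro _ ⟨f, hf, rfl⟩
  choose y hy using fun j => he.exists_linearCombination_fiberPart (hf j)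
  refine ⟨fun κ => ∏ j, y j (κ j), ?_⟩
  have hprod : fiberPart (τ ∘ ·) α (fun κ => ∏ j, y j (κ j)) =
      fun κ => ∏ j, fiberPart τ (α j) (y j) (κ j) := by
    ext κ
    simp [fiberPart_apply, Fintype.prod_ite_zero, funext_iff]
  rw [LinearMap.comp_apply, hprod, ← pureTensor_linearCombination]
  exact congrArg pureTensor (funext hy)

lemma pureTensor_mem_tensorSplineSub (he : IsAdaptedBasis m p τ e) (κ : Fin d → K) :
    pureTensor (fun j => e (κ j)) ∈ TensorSplineSub d m p (τ ∘ κ) :=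
  Submodule.subset_span ⟨_, fun j => he.isSplineC (κ j), rfl⟩

variable [NeZero m]

lemma exists_tensorCombination (he : IsAdaptedBasis m p τ e) {u : (Fin d → ℝ) → ℝ}
    (hu : u ∈ TensorSpline d m p) : ∃ c, tensorCombination (fun _ => e) c = u := by
  suffices TensorSpline d m p ≤ LinearMap.range (tensorCombination fun _ => e) from this hu
  refine Submodule.span_le.2 ?_
  rintro _ ⟨f, hf, rfl⟩
  choose y hy using fun j => he.exists_linearCombination (hf j)
  exact ⟨_, (pureTensor_linearCombination e y).symm.trans (congrArg pureTensor (funext hy))⟩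

lemma eq_of_isL2ProjSub (he : IsAdaptedBasis m p τ e) {α : Fin d → Bool} {c : (Fin d → K) → ℝ}
    {v : (Fin d → ℝ) → ℝ} (hv : IsL2ProjSub d m p α (tensorCombination (fun _ => e) c) v) :
    v = tensorCombination (fun _ => e) (fiberPart (τ ∘ ·) α c) := by
  obtain ⟨hmem, horth⟩ := hv
  obtain ⟨c', rfl⟩ := he.exists_tensorCombination_fiberPart hmem
  congr 1
  ext κ
  rw [fiberPart_apply, fiberPart_apply]
  split_ifs with hκ
  · have h := horth _ (hκ ▸ he.pureTensor_mem_tensorSplineSub κ)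
    rw [← map_sub, ipd_tensorCombination_pureTensor (fun k => (he.isH1On k).memLp 0 1)
      he.orthonormal, Pi.sub_apply, fiberPart_apply, if_pos hκ] at h
    linarith
  · rfl

lemma h1semiSqD_le_sum_fiberPart (he : IsAdaptedBasis m p τ e) (c : (Fin d → K) → ℝ) :
    h1semiSqD d (tensorCombination (fun _ => e) c) ≤
      2 * ∑ α, h1semiSqD d (tensorCombination (fun _ => e) (fiberPart (τ ∘ ·) α c)) := by
  rw [sum_h1semiSqD_fiberPart he.isH1On he.orthonormal,
    h1semiSqD_tensorCombination he.isH1On he.orthonormal, Finset.mul_sum]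
  refine Finset.sum_le_sum fun i _ => ?_
  rw [Finset.mul_sum]
  exact Finset.sum_le_sum fun ρ _ => he.h1semiSq_le_sum_fiberPart (slice i ρ c)

lemma sum_h1semiSqD_fiberPart_le (he : IsAdaptedBasis m (p + 1) τ e) (c : (Fin d → K) → ℝ) :
    ∑ α, h1semiSqD d (tensorCombination (fun _ => e) (fiberPart (τ ∘ ·) α c)) ≤
      74 * h1semiSqD d (tensorCombination (fun _ => e) c) := by
  rw [sum_h1semiSqD_fiberPart he.isH1On he.orthonormal,
    h1semiSqD_tensorCombination he.isH1On he.orthonormal, Finset.mul_sum]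
  refine Finset.sum_le_sum fun i _ => ?_
  rw [Finset.mul_sum]
  exact Finset.sum_le_sum fun ρ _ => he.sum_h1semiSq_fiberPart_le (slice i ρ c)

end IsAdaptedBasis

end Blocks

theorem stable_splitting_nd_general {d m p : ℕ} (hm : 1 ≤ m) (hp : 1 ≤ p)
    {u : (Fin d → ℝ) → ℝ} (hu : u ∈ TensorSpline d m p)
    {v : (Fin d → Bool) → (Fin d → ℝ) → ℝ} (hv : ∀ α, IsL2ProjSub d m p α u (v α)) :
    (74⁻¹ * h1semiSqD d u ≤ ∑ α, h1semiSqD d (v α) ∧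
      ∑ α, h1semiSqD d (v α) ≤ 74 * h1semiSqD d u) ∧
    (74⁻¹ * h1normSqD d u ≤ ∑ α, h1normSqD d (v α) ∧
      ∑ α, h1normSqD d (v α) ≤ 74 * h1normSqD d u) := by
  have : NeZero m := ⟨by omega⟩
  obtain ⟨p, rfl⟩ := Nat.exists_eq_add_of_le' hp
  obtain ⟨n, e, he⟩ := exists_isAdaptedBasis m (p + 1)
  obtain ⟨c, rfl⟩ := he.exists_tensorCombination hu
  obtain rfl : v = _ := funext fun α => he.eq_of_isL2ProjSub (hv α)
  have hlower := he.h1semiSqD_le_sum_fiberPart c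
  have hupper := he.sum_h1semiSqD_fiberPart_le c
  have hL2 := sum_l2normSqD_fiberPart (fun k => (he.isH1On k).memLp 0 1) he.orthonormal Sigma.fst c
  have hL2_nonneg : 0 ≤ l2normSqD d (tensorCombination (fun _ => e) c) :=
    integral_nonneg fun _ => sq_nonneg _
  simp only [h1normSqD, Finset.sum_add_distrib, hL2]
  refine ⟨⟨?_, hupper⟩, ?_, ?_⟩ <;> linarith

/-- Theorem `thm:stable-nd`: for every dimension `d ≥ 1` the
`L²`-orthogonal splitting `S^d = ⊕_{α ∈ {0,1}^d} S_α` is `H¹`-stable uniformly in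
`h` and `p`: there is a constant `c > 0` (possibly depending on `d`) such that for
every `u ∈ S^d`: `c⁻¹|u|₁² ≤ Σ_α |Q_α u|₁² ≤ c|u|₁²`, and the same two-sided bound
for the full `H¹(Ω)` norm. -/
theorem stable_splitting_nd :
    ∀ d : ℕ, 1 ≤ d → ∃ c : ℝ, 0 < c ∧ ∀ m p : ℕ, 1 ≤ m → 1 ≤ p →
      ∀ u : (Fin d → ℝ) → ℝ, u ∈ TensorSpline d m p →
      ∀ v : (Fin d → Bool) → (Fin d → ℝ) → ℝ,
        (∀ α, IsL2ProjSub d m p α u (v α)) →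
        (c⁻¹ * h1semiSqD d u ≤ ∑ α : Fin d → Bool, h1semiSqD d (v α) ∧
          ∑ α : Fin d → Bool, h1semiSqD d (v α) ≤ c * h1semiSqD d u) ∧
        (c⁻¹ * h1normSqD d u ≤ ∑ α : Fin d → Bool, h1normSqD d (v α) ∧
          ∑ α : Fin d → Bool, h1normSqD d (v α) ≤ c * h1normSqD d u) :=
  fun _ _ => ⟨74, by norm_num, fun _ _ hm hp _ hu _ hv => stable_splitting_nd_general hm hp hu hv⟩

end SplineMG
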